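/- arXiv:2209.09334 — 5 statements merged into one kernel-verified Lean document; each statement's English description precedes it below -/
import Mathlib

section
/- Let a and b be positive integers with gcd(a,b) = 1, and let p(z) = a_D z^D + a_{D-1} z^{D-1} + ... + a_1 z be a polynomial with integer coefficients and zero constant term such that D ≥ 2, a_D > 0 and a_1 ≠ 0. Then the equation a·x + b·y = p(z) is 2-Ramsey. -/
/-!
Suppose a colouring has no monochromatic solution of `a x + b y = p z` with `z` large. Put
`q t = p (a b t) / (a b)` and let `S` be a colour class. If `a b t ∈ S` and `a b t' ∉ S`, then
`b u ∈ S` forces `a (q t - u) ∉ S`, which forces `b (u + q t' - q t) ∈ S`: for `u < q t`, the set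
`A = {u | b u ∈ S}` is stable under translation by `q t' - q t`. Colour changes of both kinds at
places comparable to `N` give stable steps of both signs which are tiny compared with `q N`, and
then all these steps can be reversed. The top finite difference `G = (lc q) (deg q)!` is a
combination of such steps, so `A` is `G`-periodic on a window of length about `q N`, for arbitrarily
large `N`. Hence all positive multiples of `b G` have the same colour, but there are solutions among
them.
-/

open Filter Polynomial Set

section PolynomialGrowth

theorem tendsto_eval_int_atTop {f : ℤ[X]} (hdeg : 0 < f.natDegree) (hlead : 0 < f.leadingCoeff) :
    Tendsto (fun t => f.eval t) atTop atTop := by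
  have hinj : Function.Injective (Int.castRingHom ℝ) := Int.cast_injective
  have hreal : Tendsto (fun x => (f.map (Int.castRingHom ℝ)).eval x) atTop atTop := by
    refine tendsto_atTop_of_leadingCoeff_nonneg _ ?_ ?_
    · rwa [← natDegree_pos_iff_degree_pos, natDegree_map_eq_of_injective hinj]
    · rw [leadingCoeff_map_of_injective hinj]
      simpa using hlead.le
  rw [← tendsto_intCast_atTop_iff (R := ℝ)]
  simpa [Function.comp_def] using hreal.comp tendsto_intCast_atTop_atTop

theorem exists_abs_eval_int_le {f : ℤ[X]} {d : ℕ} (hf : f.natDegree ≤ d) :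
    ∃ c : ℤ, 0 ≤ c ∧ ∀ t : ℤ, 1 ≤ t → |f.eval t| ≤ c * t ^ d := by
  refine ⟨∑ i ∈ Finset.range (d + 1), |f.coeff i|, Finset.sum_nonneg fun _ _ => abs_nonneg _, ?_⟩
  intro t ht
  rw [eval_eq_sum_range' (Nat.lt_succ_of_le hf), Finset.sum_mul]
  refine (Finset.abs_sum_le_sum_abs _ _).trans (Finset.sum_le_sum fun i hi => ?_)
  rw [abs_mul, abs_of_nonneg (pow_nonneg (by omega : 0 ≤ t) i)]
  have : i ≤ d := Nat.lt_succ_iff.1 (Finset.mem_range.1 hi)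
  gcongr

theorem eventually_forall_Icc_eval_le {f g : ℤ[X]} (hlead : 0 < f.leadingCoeff)
    (hdeg : g.natDegree < f.natDegree) (C : ℤ) :
    ∀ᶠ n in atTop, ∀ t ∈ Icc n (C * n), g.eval t ≤ f.eval n := by
  obtain ⟨c, hc, hg⟩ := exists_abs_eval_int_le le_rfl (f := g)
  set h : ℤ[X] := Polynomial.C (c * C ^ g.natDegree) * X ^ g.natDegree
  have hh : h.natDegree < f.natDegree := (natDegree_C_mul_X_pow_le _ _).trans_lt hdeg
  have hlim : Tendsto (fun n => (f - h).eval n) atTop atTop := by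
    apply tendsto_eval_int_atTop
    · rw [natDegree_sub_eq_left_of_natDegree_lt hh]
      omega
    · rwa [leadingCoeff_sub_of_degree_lt (degree_lt_degree hh)]
  filter_upwards [hlim.eventually_ge_atTop 0, eventually_ge_atTop 1] with n hn hn1 t ⟨hnt, htC⟩
  have ht : 0 ≤ t := by omega
  calc g.eval t ≤ c * t ^ g.natDegree := (le_abs_self _).trans (hg t (hn1.trans hnt))
    _ ≤ c * (C * n) ^ g.natDegree := by gcongr
    _ = h.eval n := by simp [h, mul_pow, mul_assoc]
    _ ≤ f.eval n := by simpa using hn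

theorem natDegree_taylor_sub_self_lt {R : Type*} [CommRing R] {f : R[X]} (hf : f.natDegree ≠ 0)
    (m : R) : (taylor m f - f).natDegree < f.natDegree := by
  have hf0 : f ≠ 0 := by
    rintro rfl
    exact hf natDegree_zero
  by_cases hzero : taylor m f - f = 0
  · rw [hzero, natDegree_zero]
    omega
  · exact natDegree_lt_natDegree hzero (degree_sub_lt_right (by simp) hf0 (by simp))

theorem coeff_taylor_sub_self {R : Type*} [CommRing R] {f : R[X]} {d : ℕ}
    (hf : f.natDegree = d + 1) (m : R) :
    (taylor m f - f).coeff d = (d + 1) * f.leadingCoeff * m := by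
  have hdeg : (hasseDeriv d f).natDegree < 2 := by
    have := natDegree_hasseDeriv_le f d
    omega
  rw [coeff_sub, taylor_coeff, eval_eq_sum_range' hdeg, leadingCoeff, hf]
  simp [Finset.sum_range_succ, hasseDeriv_coeff, add_comm 1 d]

theorem tendsto_eval_int_add_one_sub_atTop {f : ℤ[X]} (hdeg : 2 ≤ f.natDegree)
    (hlead : 0 < f.leadingCoeff) :
    Tendsto (fun t => f.eval (t + 1) - f.eval t) atTop atTop := by
  obtain ⟨d, hd⟩ : ∃ d, f.natDegree = d + 1 := ⟨f.natDegree - 1, by omega⟩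
  have hcoeff : 0 < (taylor 1 f - f).coeff d := by
    rw [coeff_taylor_sub_self hd]
    positivity
  have hdegree : (taylor 1 f - f).natDegree = d := by
    have hlt := natDegree_taylor_sub_self_lt (f := f) (by omega) 1
    have hle := le_natDegree_of_ne_zero hcoeff.ne'
    omega
  have hlim := tendsto_eval_int_atTop (f := taylor 1 f - f) (by omega)
    (by rwa [leadingCoeff, hdegree])
  simpa [taylor_eval] using hlim

theorem eventually_strictMonoOn_eval_int {f : ℤ[X]} (hdeg : 2 ≤ f.natDegree)
    (hlead : 0 < f.leadingCoeff) : ∀ᶠ N in atTop, StrictMonoOn (fun t => f.eval t) (Ici N) := by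
  have hpos := (tendsto_eval_int_add_one_sub_atTop hdeg hlead).eventually_gt_atTop 0
  filter_upwards [eventually_forall_ge_atTop.2 hpos] with N hN
  exact strictMonoOn_of_lt_add_one ordConnected_Ici fun t _ ht _ => sub_pos.1 (hN t ht)

theorem eventually_mul_increment_le_eval_int {f : ℤ[X]} (hdeg : 2 ≤ f.natDegree)
    (hlead : 0 < f.leadingCoeff) (m M C : ℤ) :
    ∀ᶠ n in atTop, ∀ t ∈ Icc n (C * n), M * (f.eval (t + m) - f.eval t + t) ≤ f.eval n := by
  have hlt : (Polynomial.C M * (taylor m f - f + X)).natDegree < f.natDegree := by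
    have h1 := natDegree_C_mul_le M (taylor m f - f + X)
    have h2 := natDegree_add_le (taylor m f - f) X
    have h3 := natDegree_taylor_sub_self_lt (f := f) (by omega) m
    have h4 := natDegree_X_le (R := ℤ)
    omega
  simpa [taylor_eval] using eventually_forall_Icc_eval_le hlead hlt C

end PolynomialGrowth

section ScaleDiv

/-- The polynomial `p (c t) / c` in `t`, for `p` without constant term (the constant term of `p` is
ignored). -/
noncomputable def scaleDiv {R : Type*} [CommRing R] (p : R[X]) (c : R) : R[X] :=
  X * p.divX.comp (C c * X)

variable {R : Type*} [CommRing R]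

theorem coeff_zero_scaleDiv (p : R[X]) (c : R) : (scaleDiv p c).coeff 0 = 0 := by
  simp [scaleDiv]

theorem mul_eval_scaleDiv {p : R[X]} (hp : p.coeff 0 = 0) (c t : R) :
    c * (scaleDiv p c).eval t = p.eval (c * t) := by
  conv_rhs => rw [← p.divX_mul_X_add, hp]
  simp only [scaleDiv, eval_mul, eval_X, eval_comp, eval_C, map_zero, add_zero]
  ring

theorem natDegree_scaleDiv [IsDomain R] (p : R[X]) {c : R} (hc : c ≠ 0) :
    (scaleDiv p c).natDegree = p.natDegree := by
  obtain hp | hp := eq_or_ne p.natDegree 0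
  · rw [eq_C_of_natDegree_eq_zero hp]
    simp [scaleDiv]
  have hdivX : p.divX.natDegree + 1 = p.natDegree := by
    rw [natDegree_divX_eq_natDegree_tsub_one]
    omega
  have hcomp : p.divX.comp (C c * X) ≠ 0 := by
    rw [Ne, comp_C_mul_X_eq_zero_iff (mem_nonZeroDivisors_of_ne_zero hc), divX_eq_zero_iff]
    intro hpC
    exact hp (hpC ▸ natDegree_C _)
  rw [scaleDiv, natDegree_X_mul hcomp, natDegree_comp, natDegree_C_mul_X c hc, mul_one, hdivX]

theorem leadingCoeff_scaleDiv [IsDomain R] {p : R[X]} (hp : p.natDegree ≠ 0) {c : R} (hc : c ≠ 0) :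
    (scaleDiv p c).leadingCoeff = p.leadingCoeff * c ^ (p.natDegree - 1) := by
  have hdivX : p.divX.leadingCoeff = p.leadingCoeff := by
    rw [leadingCoeff, natDegree_divX_eq_natDegree_tsub_one, coeff_divX,
      Nat.sub_add_cancel (Nat.one_le_iff_ne_zero.2 hp), leadingCoeff]
  rw [scaleDiv, leadingCoeff_mul, leadingCoeff_X, one_mul,
    leadingCoeff_comp (by rw [natDegree_C_mul_X c hc]; exact one_ne_zero), hdivX,
    leadingCoeff_C_mul_X, natDegree_divX_eq_natDegree_tsub_one]

theorem leadingCoeff_scaleDiv_pos {p : ℤ[X]} (hp : p.natDegree ≠ 0) (hlead : 0 < p.leadingCoeff)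
    {c : ℤ} (hc : 0 < c) : 0 < (scaleDiv p c).leadingCoeff := by
  rw [leadingCoeff_scaleDiv hp hc.ne']
  positivity

end ScaleDiv

section Steps

/-- Translation by `h` maps `A` into itself, as long as one stays in the window `[1, W]`. -/
def StepStable (A : Set ℤ) (W h : ℤ) : Prop :=
  ∀ x ∈ Icc 1 W, x + h ∈ Icc 1 W → x ∈ A → x + h ∈ A

/-- Membership in `A` does not change under translation by `h` inside the window `[1, W]`. -/
def StepInvariant (A : Set ℤ) (W h : ℤ) : Prop :=
  ∀ x ∈ Icc 1 W, x + h ∈ Icc 1 W → (x ∈ A ↔ x + h ∈ A)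

variable {A : Set ℤ} {W : ℤ}

theorem StepStable.compl {h : ℤ} (hA : StepStable A W h) : StepStable Aᶜ W (-h) := by
  intro x hx hxh hxA hmem
  have := hA (x + -h) hxh (by rwa [neg_add_cancel_right]) hmem
  rw [neg_add_cancel_right] at this
  exact hxA this

theorem StepInvariant.of_compl {h : ℤ} (hA : StepInvariant Aᶜ W h) : StepInvariant A W h :=
  fun x hx hxh => not_iff_not.1 (hA x hx hxh)

/-- The map `y ↦ y + s` or `y - t` permutes any interval of length `s + t`, and it maps the part of
`A` in that interval injectively into itself, hence onto itself. -/
theorem StepStable.sub_mem {s t x : ℤ} (hs : 0 < s) (ht : 0 < t) (hW : s + t ≤ W)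
    (hAs : StepStable A W s) (hAt : StepStable A W (-t)) (hxW : x ≤ W) (hxs : 1 ≤ x - s)
    (hx : x ∈ A) : x - s ∈ A := by
  classical
  obtain ⟨u, hu⟩ : ∃ u, u = min (x - s - 1) (W - s - t) := ⟨_, rfl⟩
  set F := (Finset.Icc (u + 1) (u + s + t)).filter (· ∈ A) with hF
  have mem_F {y : ℤ} : y ∈ (F : Set ℤ) ↔ (u + 1 ≤ y ∧ y ≤ u + s + t) ∧ y ∈ A := by simp [hF]
  let f : ℤ → ℤ := fun y => if y ≤ u + t then y + s else y + -t
  have hmaps : MapsTo f F F := by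
    intro y hy
    obtain ⟨hyI, hyA⟩ := mem_F.1 hy
    refine mem_F.2 ?_
    by_cases hyt : y ≤ u + t
    · simp only [f, if_pos hyt]
      exact ⟨by omega, hAs y ⟨by omega, by omega⟩ ⟨by omega, by omega⟩ hyA⟩
    · simp only [f, if_neg hyt]
      exact ⟨by omega, hAt y ⟨by omega, by omega⟩ ⟨by omega, by omega⟩ hyA⟩
  have hinj : InjOn f F := by
    intro y hy y' hy' hyy
    rw [mem_F] at hy hy'
    simp only [f] at hyy
    split_ifs at hyy <;> omega
  obtain ⟨w, hw, hwx⟩ := Finset.surjOn_of_injOn_of_card_le f hmaps hinj le_rfl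
    (mem_F.2 ⟨by omega, hx⟩)
  rw [mem_F] at hw
  have hwx' : x - s = w := by
    simp only [f] at hwx
    split_ifs at hwx <;> omega
  exact hwx' ▸ hw.2

theorem StepStable.invariant_of_neg {s t : ℤ} (hs : 0 < s) (ht : t < 0) (hW : s - t ≤ W)
    (hAs : StepStable A W s) (hAt : StepStable A W t) : StepInvariant A W s := by
  intro x hx hxs
  refine ⟨hAs x hx hxs, fun hmem => ?_⟩
  have := StepStable.sub_mem hs (neg_pos.2 ht) (by omega) hAs (by rwa [neg_neg]) hxs.2
    (by simpa using hx.1) hmem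
  rwa [add_sub_cancel_right] at this

theorem StepInvariant.neg {h : ℤ} (hA : StepInvariant A W h) : StepInvariant A W (-h) := by
  intro x hx hxh
  have := hA (x + -h) hxh (by rwa [neg_add_cancel_right])
  rw [neg_add_cancel_right] at this
  exact this.symm

theorem StepStable.invariant_of_pos {s t : ℤ} (hs : 0 < s) (ht : t < 0) (hW : s - t ≤ W)
    (hAs : StepStable A W s) (hAt : StepStable A W t) : StepInvariant A W t := by
  have := StepStable.invariant_of_neg (neg_pos.2 ht) (neg_neg_of_pos hs) (by omega)
    hAt.compl hAs.compl
  simpa using this.of_compl.neg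

theorem StepInvariant.zero : StepInvariant A W 0 := fun x _ _ => by rw [add_zero]

theorem StepInvariant.add {h h' : ℤ} (hh : 2 * |h| ≤ W) (hh' : 2 * |h'| ≤ W)
    (hA : StepInvariant A W h) (hA' : StepInvariant A W h') : StepInvariant A W (h + h') := by
  intro x hx hxW
  rw [← add_assoc] at hxW ⊢
  have := abs_le.1 (show |h| ≤ W / 2 by omega)
  have := abs_le.1 (show |h'| ≤ W / 2 by omega)
  simp only [mem_Icc] at hx hxW
  by_cases hc : 1 ≤ x + h ∧ x + h ≤ W
  · exact (hA x hx hc).trans (hA' (x + h) hc hxW)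
  · have hc' : x + h' ∈ Icc 1 W := ⟨by omega, by omega⟩
    rw [add_right_comm] at hxW ⊢
    exact (hA' x hx hc').trans (hA (x + h') hc' hxW)

theorem StepInvariant.sub {h h' : ℤ} (hh : 2 * |h| ≤ W) (hh' : 2 * |h'| ≤ W)
    (hA : StepInvariant A W h) (hA' : StepInvariant A W h') : StepInvariant A W (h - h') := by
  rw [sub_eq_add_neg]
  exact hA.add hh (by rwa [abs_neg]) hA'.neg

theorem StepInvariant.fwdDiff_iterate {k : ℤ} (m : ℕ) {f : ℤ → ℤ} {B : ℤ} (hW : 2 ^ m * B ≤ W)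
    (hbound : ∀ i : ℕ, i ≤ m → |f (k + i)| ≤ B)
    (hinv : ∀ i : ℕ, i ≤ m → StepInvariant A W (f (k + i))) :
    StepInvariant A W ((fwdDiff 1)^[m] f k) := by
  induction m generalizing f B with
  | zero => simpa using hinv 0 le_rfl
  | succ m ih =>
    have hB : 0 ≤ B := (abs_nonneg _).trans (hbound 0 (Nat.zero_le _))
    have hBW : 2 * B ≤ W := by
      refine le_trans ?_ hW
      gcongr
      exact le_self_pow₀ one_le_two m.succ_ne_zero
    have hdiff (i : ℕ) : fwdDiff 1 f (k + i) = f (k + (i + 1 : ℕ)) - f (k + i) := by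
      simp [fwdDiff, add_assoc]
    refine ih (B := 2 * B) (by rwa [← mul_assoc, ← pow_succ]) (fun i hi => ?_) fun i hi => ?_
    · rw [hdiff, two_mul]
      exact (abs_sub _ _).trans (add_le_add (hbound _ (by omega)) (hbound _ (by omega)))
    · have hi₀ := hbound i (by omega)
      have hi₁ := hbound (i + 1) (by omega)
      rw [hdiff]
      exact (hinv _ (by omega)).sub (by omega) (by omega) (hinv _ (by omega))

theorem StepInvariant.leadingCoeff_mul_factorial {q : ℤ[X]} {k B : ℤ} (hdeg : 0 < q.natDegree)
    (hW : 2 ^ q.natDegree * B ≤ W)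
    (hbound : ∀ i : ℕ, i ≤ q.natDegree → |q.eval (k + i) - q.eval k| ≤ B)
    (hinv : ∀ i : ℕ, i ≤ q.natDegree → StepInvariant A W (q.eval (k + i) - q.eval k)) :
    StepInvariant A W (q.leadingCoeff * q.natDegree.factorial) := by
  set f := q - C (q.eval k)
  have hf : f.natDegree = q.natDegree := natDegree_sub_C
  have hlead : f.leadingCoeff = q.leadingCoeff :=
    leadingCoeff_sub_of_degree_lt (degree_C_le.trans_lt (natDegree_pos_iff_degree_pos.1 hdeg))
  have := StepInvariant.fwdDiff_iterate (A := A) (k := k) f.natDegree (f := fun t => f.eval t)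
    (hf ▸ hW) (by simpa only [hf, f, eval_sub, eval_C] using hbound)
    (by simpa only [hf, f, eval_sub, eval_C] using hinv)
  rw [fwdDiff_iter_degree_eq_factorial, hlead, hf] at this
  simpa using this

/-- The opposite colour changes at `k` and `l` give stable steps of both signs, which make the
stable steps between `k`, `k + 1` and `t` invertible. -/
theorem stepInvariant_of_switches {χ : Set ℤ} {q : ℤ → ℤ} {N k l t : ℤ}
    (hstable : ∀ i ≥ N, ∀ j ≥ N, i ∈ χ → j ∉ χ → StepStable A W (q j - q i))
    (hmono : StrictMonoOn q (Ici N)) (hNk : N ≤ k) (hk : k ∈ χ) (hk' : k + 1 ∉ χ)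
    (hNl : N ≤ l) (hl : l ∉ χ) (hl' : l + 1 ∈ χ) (hlW : 2 * (q (l + 1) - q l) ≤ W)
    (hkt : k ≤ t) (htW : 2 * (q t - q k) ≤ W) : StepInvariant A W (q t - q k) := by
  have hlt {i j : ℤ} (hi : N ≤ i) (hij : i < j) : q i < q j := hmono hi (hi.trans hij.le) hij
  obtain rfl | hkt := hkt.eq_or_lt
  · rw [sub_self]
    exact StepInvariant.zero
  have hqk := hlt hNk (lt_add_one k)
  have hql := hlt hNl (lt_add_one l)
  have hqt : q (k + 1) ≤ q t := hmono.monotoneOn (by simp; omega) (by simp; omega) hkt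
  have hqkt := hlt hNk hkt
  have hdown := hstable (l + 1) (by omega) l hNl hl' hl
  by_cases ht : t ∈ χ
  · have hup := hstable k hNk (k + 1) (by omega) hk hk'
    have hfirst : StepInvariant A W (q (k + 1) - q k) :=
      hup.invariant_of_neg (by omega) (by omega) (by omega) hdown
    have hrest : StepInvariant A W (q t - q (k + 1)) := by
      obtain heq | hlt := hqt.eq_or_lt
      · rw [heq, sub_self]
        exact StepInvariant.zero
      · have hback := hstable t (by omega) (k + 1) (by omega) ht hk'
        simpa using (hup.invariant_of_pos (by omega) (by omega) (by omega) hback).neg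
    have := hrest.add (by rw [abs_of_nonneg] <;> omega) (by rw [abs_of_nonneg] <;> omega) hfirst
    rwa [sub_add_sub_cancel] at this
  · exact (hstable k hNk t (by omega) hk ht).invariant_of_neg (by omega) (by omega) (by omega) hdown

theorem stepInvariant_leadingCoeff_mul_factorial_of_switches {χ : Set ℤ} {q : ℤ[X]} {N k l : ℤ}
    (hdeg : 0 < q.natDegree)
    (hstable : ∀ i ≥ N, ∀ j ≥ N, i ∈ χ → j ∉ χ → StepStable A W (q.eval j - q.eval i))
    (hmono : StrictMonoOn (fun t => q.eval t) (Ici N)) (hNk : N ≤ k) (hk : k ∈ χ) (hk' : k + 1 ∉ χ)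
    (hNl : N ≤ l) (hl : l ∉ χ) (hl' : l + 1 ∈ χ)
    (hkW : 2 ^ q.natDegree * (q.eval (k + q.natDegree) - q.eval k) ≤ W)
    (hlW : 2 ^ q.natDegree * (q.eval (l + q.natDegree) - q.eval l) ≤ W) :
    StepInvariant A W (q.leadingCoeff * q.natDegree.factorial) := by
  have hmonotone {i j : ℤ} (hi : N ≤ i) (hij : i ≤ j) : q.eval i ≤ q.eval j :=
    hmono.monotoneOn hi (hi.trans hij) hij
  have hincr {t i : ℤ} (ht : N ≤ t) (hi0 : 0 ≤ i) (hi : i ≤ q.natDegree) :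
      q.eval (t + i) - q.eval t ≤ q.eval (t + q.natDegree) - q.eval t :=
    sub_le_sub_right (hmonotone (by omega) (by omega)) _
  have hpow : (2 : ℤ) ≤ 2 ^ q.natDegree := le_self_pow₀ one_le_two hdeg.ne'
  have hsmall {t i : ℤ} (ht : N ≤ t) (hi0 : 0 ≤ i) (hi : i ≤ q.natDegree)
      (htW : 2 ^ q.natDegree * (q.eval (t + q.natDegree) - q.eval t) ≤ W) :
      2 * (q.eval (t + i) - q.eval t) ≤ W := by
    have hnonneg : 0 ≤ q.eval (t + i) - q.eval t := sub_nonneg.2 (hmonotone ht (by omega))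
    exact (mul_le_mul hpow (hincr ht hi0 hi) hnonneg (by positivity)).trans htW
  refine StepInvariant.leadingCoeff_mul_factorial (k := k) hdeg hkW (fun i hi => ?_) fun i hi => ?_
  · rw [abs_of_nonneg (sub_nonneg.2 (hmonotone hNk (by omega)))]
    exact hincr hNk (by omega) (by omega)
  · exact stepInvariant_of_switches hstable hmono hNk hk hk' hNl hl hl'
      (hsmall hNl zero_le_one (by omega) hlW) (by omega) (hsmall hNk (by omega) (by omega) hkW)

end Steps

theorem exists_mem_Ico_mem_add_one_notMem {P : Set ℤ} {i j : ℤ} (hij : i ≤ j) (hi : i ∈ P)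
    (hj : j ∉ P) : ∃ k ∈ Ico i j, k ∈ P ∧ k + 1 ∉ P := by
  induction j, hij using Int.leInduction with
  | base => exact absurd hi hj
  | succ j hij ih =>
    by_cases h : j ∈ P
    · exact ⟨j, ⟨hij, lt_add_one j⟩, h, hj⟩
    · obtain ⟨k, hk, hkP⟩ := ih h
      exact ⟨k, Ico_subset_Ico_right (by omega) hk, hkP⟩

/-- `S` contains only boundedly large solutions `z` of `a x + b y = p z` with `x`, `y` positive. -/
def SolutionFree (a b : ℤ) (p : ℤ[X]) (S : Set ℤ) : Prop :=
  ∀ᶠ z in atTop, z ∈ S → ∀ x ∈ S, ∀ y ∈ S, 0 < x → 0 < y → a * x + b * y ≠ p.eval z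

namespace SolutionFree

variable {a b : ℤ} {p : ℤ[X]} {S : Set ℤ}

theorem scale (hS : SolutionFree a b p S) (hconst : p.coeff 0 = 0) {c : ℤ} (hc : 0 < c) :
    SolutionFree a b (scaleDiv p c) {t | c * t ∈ S} := by
  have hlim : Tendsto (fun t => c * t) atTop atTop := tendsto_id.const_mul_atTop' hc
  filter_upwards [hlim.eventually hS] with z hz hzS x hx y hy hx0 hy0 heq
  refine hz hzS _ hx _ hy (by positivity) (by positivity) ?_
  rw [← mul_eval_scaleDiv hconst, ← heq]
  ring

theorem exists_pos_notMem (hS : SolutionFree a b p S) (hb : 0 < b) (hdeg : 0 < p.natDegree)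
    (hlead : 0 < p.leadingCoeff) (hconst : p.coeff 0 = 0) : ∃ n > 0, n ∉ S := by
  by_contra! hall
  have hlim : Tendsto (fun j => (scaleDiv p b).eval j) atTop atTop :=
    tendsto_eval_int_atTop (by rwa [natDegree_scaleDiv _ hb.ne'])
      (leadingCoeff_scaleDiv_pos (by omega) hlead hb)
  have hmul : Tendsto (fun j => b * j) atTop atTop := tendsto_id.const_mul_atTop' hb
  obtain ⟨j, hj, hja, hj0⟩ := ((hmul.eventually hS).and
    ((hlim.eventually_gt_atTop a).and (eventually_gt_atTop 0))).exists
  have hy : 0 < (scaleDiv p b).eval j - a := sub_pos.2 hja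
  refine hj (hall _ (by positivity)) b (hall b hb) _ (hall _ hy) hb hy ?_
  rw [← mul_eval_scaleDiv hconst]
  ring

theorem exists_mul_notMem (hS : SolutionFree a b p S) (hb : 0 < b) (hdeg : 0 < p.natDegree)
    (hlead : 0 < p.leadingCoeff) (hconst : p.coeff 0 = 0) {c : ℤ} (hc : 0 < c) :
    ∃ n > 0, c * n ∉ S :=
  (hS.scale hconst hc).exists_pos_notMem hb (by rwa [natDegree_scaleDiv _ hc.ne'])
    (leadingCoeff_scaleDiv_pos (by omega) hlead hc) (coeff_zero_scaleDiv p c)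

theorem frequently_mul_mem_mul_add_one_notMem (hS : SolutionFree a b p S)
    (hSc : SolutionFree a b p Sᶜ) (hb : 0 < b) (hdeg : 0 < p.natDegree)
    (hlead : 0 < p.leadingCoeff) (hconst : p.coeff 0 = 0) :
    ∃ᶠ n in atTop, b * n ∈ S ∧ b * (n + 1) ∉ S := by
  rw [frequently_atTop]
  intro n₀
  obtain ⟨m, hm⟩ : ∃ m, m = max n₀ 1 := ⟨_, rfl⟩
  have hm0 : 0 < m := by omega
  obtain ⟨i, hi0, hi⟩ := hSc.exists_mul_notMem hb hdeg hlead hconst (c := b * m) (by positivity)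
  obtain ⟨j, hj0, hj⟩ := hS.exists_mul_notMem hb hdeg hlead hconst (c := b * (m * i))
    (by positivity)
  rw [notMem_compl_iff, mul_assoc] at hi
  rw [mul_assoc] at hj
  obtain ⟨k, hk, hkS, hkS'⟩ := exists_mem_Ico_mem_add_one_notMem (P := {n | b * n ∈ S})
    (le_mul_of_one_le_right (by positivity) hj0) hi hj
  have hmi : m ≤ m * i := le_mul_of_one_le_right hm0.le hi0
  exact ⟨k, by have := hk.1; omega, hkS, hkS'⟩

theorem eventually_sub_notMem (hS : SolutionFree a b p S) (hb : 0 < b) (hconst : p.coeff 0 = 0) :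
    ∀ᶠ n in atTop, b * n ∈ S → ∀ s > 0, b * s ∈ S → 0 < (scaleDiv p b).eval n - a * s →
      (scaleDiv p b).eval n - a * s ∉ S := by
  have hlim : Tendsto (fun n => b * n) atTop atTop := tendsto_id.const_mul_atTop' hb
  filter_upwards [hlim.eventually hS] with n hn hnS s hs hsS hpos hmem
  refine hn hnS _ hsS _ hmem (by positivity) hpos ?_
  rw [← mul_eval_scaleDiv hconst]
  ring

end SolutionFree

/-- For `s` about `f n / (2 (a + b))`, the increments of `f` at `n` are negligible compared with
`s`. -/
theorem eventually_exists_comparable_scale {f : ℤ[X]} {a b : ℤ} (ha : 0 < a) (hb : 0 < b)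
    (hdeg : 2 ≤ f.natDegree) (hlead : 0 < f.leadingCoeff) (N : ℤ) :
    ∀ᶠ n in atTop, ∃ s ≥ N, 0 < s ∧ b * s ≤ f.eval n - a * n ∧
      s ≤ f.eval (n + 1) - a * s ∧ f.eval (n + 1) - a * s ≤ f.eval n - a * n ∧
      f.eval n - a * n < f.eval (n + 1) - a * (n + 1) ∧
      f.eval (n + 1) - a * (n + 1) ≤ 8 * (a + b) * s := by
  set K := 2 * (a + b)
  have hN : 0 ≤ |N| := abs_nonneg N
  filter_upwards [(tendsto_eval_int_add_one_sub_atTop hdeg hlead).eventually_gt_atTop a,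
    eventually_mul_increment_le_eval_int hdeg hlead 1 (K * (a + |N| + 1) + a) 1,
    eventually_gt_atTop 0] with n hinc hgrow hn
  have hgrow := hgrow n ⟨le_rfl, by omega⟩
  set I := f.eval (n + 1) - f.eval n
  set Y := f.eval n - a * n
  have hK0 : 0 < K := by positivity
  have hYgrow : (I + a * n + |N|) * K ≤ Y := by
    have hle : I + a * n + |N| ≤ (a + |N| + 1) * (I + n) := by nlinarith
    nlinarith [mul_le_mul_of_nonneg_left hle hK0.le]
  obtain ⟨s, hs⟩ : ∃ s, s = Y / K := ⟨_, rfl⟩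
  have hsI : I + a * n + |N| ≤ s := by rwa [hs, Int.le_ediv_iff_mul_le hK0]
  have hsY : K * s ≤ Y := hs ▸ Int.mul_ediv_self_le hK0.ne'
  have hYs : Y < (s + 1) * K := hs ▸ Int.lt_ediv_add_one_mul_self Y hK0
  have hNs := le_abs_self N
  have han : 0 < a * n := by positivity
  have hs0 : 0 < s := by omega
  have has : s ≤ a * s := le_mul_of_one_le_left hs0.le ha
  have hbs : s ≤ b * s := le_mul_of_one_le_left hs0.le hb
  have hsum : 2 * (a * s) + 2 * (b * s) ≤ Y := by linarith
  refine ⟨s, by omega, hs0, by omega, by omega, by omega, by linarith, ?_⟩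
  nlinarith

namespace SolutionFree

variable {a b : ℤ} {p : ℤ[X]} {S : Set ℤ}

theorem frequently_comparable_switches (hS : SolutionFree a b p S) (hSc : SolutionFree a b p Sᶜ)
    (ha : 0 < a) (hb : 0 < b) (hdeg : 2 ≤ p.natDegree) (hlead : 0 < p.leadingCoeff)
    (hconst : p.coeff 0 = 0) :
    ∃ᶠ N in atTop, (∃ k ∈ Icc N (8 * (a + b) * N), k ∈ S ∧ k + 1 ∉ S) ∧
      ∃ l ∈ Icc N (8 * (a + b) * N), l ∉ S ∧ l + 1 ∈ S := by
  rw [frequently_atTop]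
  intro N
  have hscale := eventually_exists_comparable_scale (f := scaleDiv p b) ha hb
    (by rwa [natDegree_scaleDiv _ hb.ne']) (leadingCoeff_scaleDiv_pos (by omega) hlead hb) N
  have hnext : Tendsto (fun n : ℤ => n + 1) atTop atTop :=
    tendsto_atTop_add_const_right _ 1 tendsto_id
  obtain ⟨n, ⟨hn, hn'⟩, hfree, hfree', hscale, hn0⟩ :=
    ((hS.frequently_mul_mem_mul_add_one_notMem hSc hb (by omega) hlead hconst).and_eventually
      ((hS.eventually_sub_notMem hb hconst).and
      ((hnext.eventually (hSc.eventually_sub_notMem hb hconst)).and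
      (hscale.and (eventually_gt_atTop 0))))).exists
  set f := scaleDiv p b
  obtain ⟨s, hsN, hs0, hbs, hs_le, hle, hlt, hle'⟩ := hscale
  have hbs' : s ≤ b * s := le_mul_of_one_le_left hs0.le hb
  have hlow : f.eval n - a * n ∉ S := hfree hn n hn0 hn (by omega)
  have hhigh : f.eval (n + 1) - a * (n + 1) ∈ S :=
    notMem_compl_iff.1 (hfree' hn' (n + 1) (by omega) hn' (by omega))
  obtain ⟨i, hi, hiS⟩ : ∃ i ∈ Icc s (f.eval n - a * n), i ∈ S := by
    by_cases h : b * s ∈ S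
    · exact ⟨b * s, ⟨hbs', hbs⟩, h⟩
    · exact ⟨f.eval (n + 1) - a * s, ⟨hs_le, hle⟩,
        notMem_compl_iff.1 (hfree' hn' s hs0 h (by omega))⟩
  obtain ⟨k, hk, hkS⟩ := exists_mem_Ico_mem_add_one_notMem hi.2 hiS hlow
  obtain ⟨l, hl, hlS, hlS'⟩ := exists_mem_Ico_mem_add_one_notMem (P := Sᶜ) hlt.le hlow
    (notMem_compl_iff.2 hhigh)
  rw [mem_Icc] at hi
  rw [mem_Ico] at hk hl
  exact ⟨s, hsN, ⟨k, ⟨by omega, by omega⟩, hkS⟩, l, ⟨by omega, by omega⟩, hlS,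
    notMem_compl_iff.1 hlS'⟩

theorem eventually_stepStable (hS : SolutionFree a b p S) (hSc : SolutionFree a b p Sᶜ)
    (ha : 0 < a) (hb : 0 < b) (hconst : p.coeff 0 = 0) :
    ∀ᶠ N in atTop, ∀ t ≥ N, ∀ t' ≥ N, a * b * t ∈ S → a * b * t' ∉ S →
      ∀ W < (scaleDiv p (a * b)).eval t, StepStable {u | b * u ∈ S} W
        ((scaleDiv p (a * b)).eval t' - (scaleDiv p (a * b)).eval t) := by
  set q := scaleDiv p (a * b)
  have hlim : Tendsto (fun t => a * b * t) atTop atTop :=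
    tendsto_id.const_mul_atTop' (mul_pos ha hb)
  filter_upwards [eventually_forall_ge_atTop.2 (hlim.eventually hS),
    eventually_forall_ge_atTop.2 (hlim.eventually hSc)] with N hN hNc t ht t' ht' htS ht'S W hW u
    ⟨hu, huW⟩ ⟨hu', _⟩ huS
  have hsolution (t u v : ℤ) (h : u + v = q.eval t) :
      a * (b * u) + b * (a * v) = p.eval (a * b * t) := by
    rw [← mul_eval_scaleDiv hconst, ← h]
    ring
  have hv : 0 < q.eval t - u := by omega
  have hvS : a * (q.eval t - u) ∉ S := fun hmem =>
    hN t ht htS _ huS _ hmem (by positivity) (by positivity) (hsolution _ _ _ (by ring))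
  by_contra hmem
  exact hNc t' ht' ht'S _ hmem _ hvS (by positivity) (by positivity) (hsolution _ _ _ (by ring))

theorem exists_frequently_stepInvariant (hS : SolutionFree a b p S) (hSc : SolutionFree a b p Sᶜ)
    (ha : 0 < a) (hb : 0 < b) (hdeg : 2 ≤ p.natDegree) (hlead : 0 < p.leadingCoeff)
    (hconst : p.coeff 0 = 0) :
    ∃ G > 0, ∃ᶠ W in atTop, StepInvariant {u | b * u ∈ S} W G := by
  have hab : 0 < a * b := mul_pos ha hb
  have hstable := hS.eventually_stepStable hSc ha hb hconst
  set q := scaleDiv p (a * b)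
  have hqdeg : 2 ≤ q.natDegree := by rwa [natDegree_scaleDiv _ hab.ne']
  have hqlead : 0 < q.leadingCoeff := leadingCoeff_scaleDiv_pos (by omega) hlead hab
  have hqlim : Tendsto (fun N => q.eval N - 1) atTop atTop :=
    tendsto_atTop_add_const_right _ _ (tendsto_eval_int_atTop (by omega) hqlead)
  refine ⟨q.leadingCoeff * q.natDegree.factorial, by positivity, hqlim.frequently ?_⟩
  have hswitches := (hS.scale hconst hab).frequently_comparable_switches (hSc.scale hconst hab)
    ha hb hqdeg hqlead (coeff_zero_scaleDiv p _)
  refine (hswitches.and_eventually (hstable.and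
    ((eventually_strictMonoOn_eval_int hqdeg hqlead).and
    ((eventually_mul_increment_le_eval_int hqdeg hqlead q.natDegree (2 ^ q.natDegree)
      (8 * (a + b))).and (eventually_gt_atTop 0))))).mono ?_
  rintro N ⟨⟨⟨k, hk, hkS, hkS'⟩, l, hl, hlS, hlS'⟩, hstable, hmono, hgrow, hN⟩
  have hbound {t : ℤ} (ht : t ∈ Icc N (8 * (a + b) * N)) :
      2 ^ q.natDegree * (q.eval (t + q.natDegree) - q.eval t) ≤ q.eval N - 1 := by
    have hpow : (0 : ℤ) < 2 ^ q.natDegree * t := mul_pos (by positivity) (hN.trans_le ht.1)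
    linarith [hgrow t ht]
  have hNt {t : ℤ} (ht : N ≤ t) : q.eval N ≤ q.eval t := hmono.monotoneOn self_mem_Ici ht ht
  exact stepInvariant_leadingCoeff_mul_factorial_of_switches (χ := {t | a * b * t ∈ S}) (by omega)
    (fun t ht t' ht' htS ht'S =>
      hstable t ht t' ht' htS ht'S _ ((sub_one_lt _).trans_le (hNt ht)))
    hmono hk.1 hkS hkS' hl.1 hlS hlS' (hbound hk) (hbound hl)

theorem exists_period (hS : SolutionFree a b p S) (hSc : SolutionFree a b p Sᶜ)
    (ha : 0 < a) (hb : 0 < b) (hdeg : 2 ≤ p.natDegree) (hlead : 0 < p.leadingCoeff)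
    (hconst : p.coeff 0 = 0) : ∃ G > 0, ∀ x > 0, b * x ∈ S ↔ b * (x + G) ∈ S := by
  obtain ⟨G, hG, hinv⟩ := hS.exists_frequently_stepInvariant hSc ha hb hdeg hlead hconst
  refine ⟨G, hG, fun x hx => ?_⟩
  obtain ⟨W, hW, hinvW⟩ := frequently_atTop.1 hinv (x + G)
  exact hinvW x ⟨hx, by omega⟩ ⟨by omega, hW⟩

theorem not_compl (hS : SolutionFree a b p S) (ha : 0 < a) (hb : 0 < b)
    (hdeg : 2 ≤ p.natDegree) (hlead : 0 < p.leadingCoeff) (hconst : p.coeff 0 = 0) :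
    ¬SolutionFree a b p Sᶜ := by
  intro hSc
  obtain ⟨G, hG, hperiod⟩ := hS.exists_period hSc ha hb hdeg hlead hconst
  have hmultiples : ∀ j > 0, b * G * j ∈ S ↔ b * G ∈ S := by
    intro j hj
    induction j, (show 1 ≤ j from hj) using Int.leInduction with
    | base => rw [mul_one]
    | succ j hj1 ih =>
      rw [← ih hj1, mul_assoc, mul_assoc, mul_add, mul_one]
      exact (hperiod _ (mul_pos hG hj1)).symm
  obtain ⟨i, hi0, hi⟩ := hS.exists_mul_notMem hb (by omega) hlead hconst (mul_pos hb hG)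
  obtain ⟨j, hj0, hj⟩ := hSc.exists_mul_notMem hb (by omega) hlead hconst (mul_pos hb hG)
  rw [hmultiples i hi0] at hi
  rw [notMem_compl_iff, hmultiples j hj0] at hj
  exact hi hj

end SolutionFree

theorem stmt_0_general (a b : ℕ) (ha : 0 < a) (hb : 0 < b) (p : Polynomial ℤ)
    (hdeg : 2 ≤ p.natDegree) (hlead : 0 < p.leadingCoeff) (hconst : p.coeff 0 = 0) (φ : ℕ → Fin 2) :
    {w : ℕ × ℕ × ℕ | 0 < w.1 ∧ 0 < w.2.1 ∧ 0 < w.2.2 ∧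
      φ w.1 = φ w.2.1 ∧ φ w.1 = φ w.2.2 ∧
      (a : ℤ) * w.1 + (b : ℤ) * w.2.1 = p.eval (w.2.2 : ℤ)}.Infinite := by
  intro hfin
  obtain ⟨T, hT⟩ := (hfin.image fun w => w.2.2).bddAbove
  have hfree (i : Fin 2) : SolutionFree a b p {z | φ z.toNat = i} := by
    filter_upwards [eventually_gt_atTop (T : ℤ)] with z hz hzi x hxi y hyi hx hy heq
    lift x to ℕ using hx.le
    lift y to ℕ using hy.le
    lift z to ℕ using by omega
    simp only [Int.toNat_natCast, Nat.cast_pos, Nat.cast_lt] at *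
    exact hz.not_ge (hT ⟨(x, y, z), ⟨hx, hy, by dsimp only; omega, hxi.trans hyi.symm,
      hxi.trans hzi.symm, heq⟩, rfl⟩)
  have hcompl : {z : ℤ | φ z.toNat = 0}ᶜ = {z | φ z.toNat = 1} := by
    ext z
    change ¬φ z.toNat = 0 ↔ φ z.toNat = 1
    omega
  exact (hfree 0).not_compl (by omega) (by omega) hdeg hlead hconst (hcompl ▸ hfree 1)

/-- Let `a` and `b` be positive integers with `gcd(a,b) = 1`, and let
`p(z) = a_D z^D + ⋯ + a_1 z` be an integer polynomial with zero constant term, degree `D ≥ 2`,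
positive leading coefficient and `a_1 ≠ 0`. Then the equation `a·x + b·y = p(z)` is 2-Ramsey:
every 2-colouring of the positive integers admits infinitely many monochromatic solutions. -/
theorem stmt_0 (a b : ℕ) (ha : 0 < a) (hb : 0 < b) (hab : Nat.gcd a b = 1)
    (p : Polynomial ℤ) (hdeg : 2 ≤ p.natDegree) (hlead : 0 < p.leadingCoeff)
    (hconst : p.coeff 0 = 0) (hlin : p.coeff 1 ≠ 0) :
    ∀ φ : ℕ → Fin 2,
      {w : ℕ × ℕ × ℕ | 0 < w.1 ∧ 0 < w.2.1 ∧ 0 < w.2.2 ∧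
        φ w.1 = φ w.2.1 ∧ φ w.1 = φ w.2.2 ∧
        (a : ℤ) * w.1 + (b : ℤ) * w.2.1 = p.eval (w.2.2 : ℤ)}.Infinite :=
  stmt_0_general a b ha hb p hdeg hlead hconst
end

section
/- Let a and n be positive integers with n ≥ 2. Then the equation a·x + y = z^n is 2-Ramsey. -/
/-!
Dilating the colouring by `a * (a + 1)` turns the equation into `a * x + y = a * f z` with
`f z = (a + 1) * k * z ^ n`, which is solved by `x = y = a * k * z ^ n`. Suppose that it has no
monochromatic solution with large `z`.

If `p < q` have different colours, then the shift by `f q - f p` preserves the colour of `p` on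
`[1, f p)`: for `x` of this colour the point `y = a * f p - a * x` gets the colour of `q`, and since
`a * (x + (f q - f p)) + y = a * f q`, the point `x + (f q - f p)` does not. When one colour is
preserved by a shift `s` and the other one by a shift `d`, the two act on an interval of length
`s + d` as a rotation, so both are genuine periods of the colouring.

Call `p` a colour change if `p` and `p + 1` have different colours. Given colour changes `p` and
`q ∈ (p, 2 * p]` of opposite directions, all differences `f j - f i` with `i`, `j` in a short
interval starting at `p` are periods on `[1, f p]`, and taking `n`-th differences, so is the
constant `g = (a + 1) * k * n!`. But both colours occur among the multiples of `g`, since `z` and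
`a * k * z ^ n` have different colours. So the colour remains constant on `(p, 2 * p]` after every
large colour change `p`. The colour of `p` also persists along progressions of difference
`s = f (p + 1) - f p`; these leave no room for a colour change above `s`, so it fills the interval
from about `s` to `f p`. This interval contains `a * k * p ^ n`, a contradiction.
-/

open Filter

/-- On an interval of length `s + d`, the partial maps `x ↦ x + s` and `x ↦ x - d` combine into a
rotation. A set mapped into itself by a permutation of a finite set is also mapped into itself by
the inverse. -/
lemma mem_of_add_mem {A : Set ℕ} {s d R : ℕ} (hd : 0 < d) (hR : s + d ≤ R)
    (up : ∀ x, 0 < x → x + s ≤ R → x ∈ A → x + s ∈ A)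
    (down : ∀ x, 0 < x → x + d ≤ R → x + d ∈ A → x ∈ A)
    {x : ℕ} (hx : 0 < x) (hxR : x + s ≤ R) (hxA : x + s ∈ A) : x ∈ A := by
  classical
  obtain ⟨b, hb, hbR, hbx, hxb⟩ : ∃ b, 0 < b ∧ b + (s + d) ≤ R + 1 ∧ b ≤ x ∧ x < b + d :=
    ⟨min x (R + 1 - (s + d)), by omega, by omega, by omega, by omega⟩
  let I := {y ∈ Finset.Ico b (b + (s + d)) | y ∈ A}
  let rot : ℕ → ℕ := fun y => if y < b + d then y + s else y - d
  have rot_mapsTo : Set.MapsTo rot I I := by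
    intro y hy
    simp only [I, rot, Finset.coe_filter, Finset.mem_Ico, Set.mem_ofPred_eq] at hy ⊢
    split_ifs with hyb
    · exact ⟨by omega, up y (by omega) (by omega) hy.2⟩
    · refine ⟨by omega, down (y - d) (by omega) (by omega) ?_⟩
      rw [Nat.sub_add_cancel (by omega)]
      exact hy.2
  have rot_injOn : Set.InjOn rot (Finset.Ico b (b + (s + d))) := by
    intro y hy z hz hyz
    simp only [rot, Finset.coe_Ico, Set.mem_Ico] at hy hz hyz
    split_ifs at hyz <;> omega
  have hI : (I : Set ℕ) ⊆ Finset.Ico b (b + (s + d)) :=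
    Finset.coe_subset.2 (Finset.filter_subset _ _)
  obtain ⟨y, hyI, hyx⟩ := Finset.surjOn_of_injOn_of_card_le rot rot_mapsTo (rot_injOn.mono hI)
    le_rfl (show x + s ∈ (I : Set ℕ) by simp [I, hxA]; omega)
  have hxy : y = x := rot_injOn (hI hyI) (by simp; omega) (by simp [hyx, rot, hxb])
  exact hxy ▸ (Finset.mem_filter.1 hyI).2

/-- The integer `h` is a period of the restriction of `φ` to `[1, R]`. -/
def IsPeriodUpTo {α : Type*} (φ : ℕ → α) (R : ℕ) (h : ℤ) : Prop :=
  ∀ x y : ℕ, 0 < x → x ≤ R → 0 < y → y ≤ R → (y : ℤ) = x + h → φ x = φ y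

namespace IsPeriodUpTo

variable {α : Type*} {φ : ℕ → α} {R : ℕ} {h k : ℤ}

lemma neg (hh : IsPeriodUpTo φ R h) : IsPeriodUpTo φ R (-h) :=
  fun x y hx hxR hy hyR hxy => (hh y x hy hyR hx hxR (by omega)).symm

lemma add (hh : IsPeriodUpTo φ R h) (hk : IsPeriodUpTo φ R k) (hR : |h| + |k| ≤ R) :
    IsPeriodUpTo φ R (h + k) := by
  intro x y hx hxR hy hyR hxy
  have hsub : h - k ≤ R :=
    (le_abs_self _).trans ((abs_sub h k).trans hR)
  have hsub' : k - h ≤ R :=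
    (le_abs_self _).trans ((abs_sub k h).trans (by rwa [add_comm]))
  by_cases hmid : 0 < x + h ∧ x + h ≤ R
  · obtain ⟨w, hw⟩ := Int.eq_ofNat_of_zero_le hmid.1.le
    exact (hh x w hx hxR (by omega) (by omega) (by omega)).trans
      (hk w y (by omega) (by omega) hy hyR (by omega))
  · -- Here `h` and `k` have opposite signs, and the path through `x + k` stays inside `[1, R]`.
    obtain ⟨w, hw⟩ := Int.eq_ofNat_of_zero_le (show 0 ≤ x + k by omega)
    exact (hk x w hx hxR (by omega) (by omega) (by omega)).trans
      (hh w y (by omega) (by omega) hy hyR (by omega))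

lemma sub (hh : IsPeriodUpTo φ R h) (hk : IsPeriodUpTo φ R k) (hR : |h| + |k| ≤ R) :
    IsPeriodUpTo φ R (h - k) :=
  sub_eq_add_neg h k ▸ hh.add hk.neg (by rwa [abs_neg])

lemma fwdDiff_iter {M : Type*} [AddCommMonoid M] {g : M → ℤ} {u v : M} {n L : ℕ}
    (hg : ∀ i ≤ n, IsPeriodUpTo φ R (g (u + i • v))) (hL : ∀ i ≤ n, |g (u + i • v)| ≤ L)
    (hR : 2 ^ n * L ≤ R) : IsPeriodUpTo φ R ((fwdDiff v)^[n] g u) := by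
  induction n generalizing g L with
  | zero => simpa using hg 0 le_rfl
  | succ n ih =>
    have hsucc : ∀ i : ℕ, fwdDiff v g (u + i • v) = g (u + (i + 1) • v) - g (u + i • v) :=
      fun i => by rw [fwdDiff, add_assoc, succ_nsmul]
    have hsum : ∀ i ≤ n, |g (u + (i + 1) • v)| + |g (u + i • v)| ≤ 2 * L := fun i hi => by
      linarith [hL (i + 1) (by omega), hL i (by omega)]
    have hLR : 2 * L ≤ R := by
      refine le_trans ?_ hR
      rw [pow_succ, mul_assoc]
      exact Nat.le_mul_of_pos_left _ (by positivity)
    rw [Function.iterate_succ_apply]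
    refine ih (L := 2 * L) (fun i hi => ?_) (fun i hi => ?_) (by rwa [← mul_assoc, ← pow_succ])
    · rw [hsucc]
      exact (hg (i + 1) (by omega)).sub (hg i (by omega))
        ((hsum i hi).trans (by exact_mod_cast hLR))
    · rw [hsucc]
      exact (abs_sub _ _).trans (by exact_mod_cast hsum i hi)

lemma eq_of_dvd {g x y : ℕ} (hg : IsPeriodUpTo φ R g) (hx : 0 < x) (hxR : x ≤ R) (hgx : g ∣ x)
    (hy : 0 < y) (hyR : y ≤ R) (hgy : g ∣ y) : φ x = φ y := by
  have eq_first : ∀ i, g * (i + 1) ≤ R → φ (g * (i + 1)) = φ g := by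
    intro i
    have hg0 : 0 < g := Nat.pos_of_dvd_of_pos hgx hx
    induction i with
    | zero => simp
    | succ i ih =>
      intro hi
      have hstep : g * (i + 1 + 1) = g * (i + 1) + g := by ring
      refine (hg _ _ (by positivity) (by omega) (by positivity) hi ?_).symm.trans (ih (by omega))
      exact_mod_cast hstep
  obtain ⟨i, rfl⟩ := hgx
  obtain ⟨j, rfl⟩ := hgy
  obtain ⟨i, rfl⟩ := Nat.exists_eq_succ_of_ne_zero (Nat.pos_of_mul_pos_left hx).ne'
  obtain ⟨j, rfl⟩ := Nat.exists_eq_succ_of_ne_zero (Nat.pos_of_mul_pos_left hy).ne'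
  exact (eq_first i hxR).trans (eq_first j hyR).symm

end IsPeriodUpTo

lemma exists_last_eq {α : Type*} {φ : ℕ → α} {p q : ℕ} (hpq : p ≤ q) (h : φ q ≠ φ p) :
    ∃ t, p ≤ t ∧ t < q ∧ φ t = φ p ∧ φ (t + 1) ≠ φ p := by
  by_contra! hcon
  refine h (Nat.le_induction (m := p) (P := fun t _ => t ≤ q → φ t = φ p) (fun _ => rfl) ?_ q hpq
    le_rfl)
  exact fun t hpt ih htq => hcon t hpt (by omega) (ih (by omega))

lemma eventually_mul_add_pow_le (C r n : ℕ) :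
    ∀ᶠ p : ℕ in atTop, C * (p + r) ^ n ≤ (C + 1) * p ^ n := by
  have htendsto : Tendsto (fun p : ℕ => C * (1 + (r : ℝ) / p) ^ n) atTop (nhds C) := by
    simpa using (((tendsto_const_div_atTop_nhds_zero_nat (r : ℝ)).const_add 1).pow n).const_mul
      (C : ℝ)
  filter_upwards [htendsto.eventually_le_const (lt_add_one (C : ℝ)), eventually_gt_atTop 0]
    with p hp hp0
  have hp0' : (0 : ℝ) < p := by exact_mod_cast hp0
  have hreal : (C : ℝ) * (p + r) ^ n ≤ (C + 1) * p ^ n := by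
    calc (C : ℝ) * (p + r) ^ n = C * (1 + r / p) ^ n * p ^ n := by
          rw [mul_assoc, ← mul_pow, add_mul, one_mul, div_mul_cancel₀ _ hp0'.ne']
      _ ≤ (C + 1) * p ^ n := by gcongr
  exact_mod_cast hreal

lemma eventually_mul_add_pow_le_add_div (K : ℕ) {C : ℕ} (hC : 0 < C) (r n : ℕ) :
    ∀ᶠ p : ℕ in atTop, K * (p + r) ^ n ≤ K * p ^ n + K * p ^ n / C := by
  filter_upwards [eventually_mul_add_pow_le C r n] with p hp
  rw [← tsub_le_iff_left, Nat.le_div_iff_mul_le hC, Nat.sub_mul, tsub_le_iff_left]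
  calc K * (p + r) ^ n * C = K * (C * (p + r) ^ n) := by ring
    _ ≤ K * ((C + 1) * p ^ n) := Nat.mul_le_mul_left K hp
    _ = K * p ^ n * C + K * p ^ n := by ring

lemma fwdDiff_iter_fwdDiff_const_mul_pow (K u : ℤ) (n : ℕ) :
    (fwdDiff 1)^[n] (fwdDiff 1 fun z : ℤ => K * z ^ (n + 1)) u = K * (n + 1).factorial := by
  rw [← Function.iterate_succ_apply]
  have := congrFun (fwdDiff_iter_const_smul (1 : ℤ) K (fun z : ℤ => z ^ (n + 1)) (n + 1)) u
  simpa [fwdDiff_iter_eq_factorial, smul_eq_mul, Pi.smul_def] using this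

/-- The colouring `φ` has no monochromatic solution of `a * x + y = a * f z` with `N ≤ z`. -/
def NoMonoSol (φ : ℕ → Fin 2) (a : ℕ) (f : ℕ → ℕ) (N : ℕ) : Prop :=
  ∀ x y z, 0 < x → 0 < y → N ≤ z → a * x + y = a * f z → φ x = φ y → φ x ≠ φ z

namespace NoMonoSol

section Shift

variable {φ : ℕ → Fin 2} {a : ℕ} {f : ℕ → ℕ} {N p q : ℕ}

lemma color_add (h : NoMonoSol φ a f N) (ha : 0 < a) (hp : N ≤ p) (hq : N ≤ q)
    (hpq : φ p ≠ φ q) {s : ℕ} (hs : f q = f p + s) {x : ℕ} (hx : 0 < x) (hxp : x < f p)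
    (hc : φ x = φ p) : φ (x + s) = φ p := by
  obtain ⟨d, hd⟩ := Nat.exists_eq_add_of_lt hxp
  have hy : 0 < a * (d + 1) := by positivity
  have hy_ne : φ x ≠ φ (a * (d + 1)) := fun hxy =>
    h x _ p hx hy hp (by rw [hd]; ring) hxy hc
  by_contra hcon
  have hsol : a * (x + s) + a * (d + 1) = a * f q := by rw [hs, hd]; ring
  exact h (x + s) _ q (by omega) hy hq hsol (by omega) (by omega)

lemma color_add_mul (h : NoMonoSol φ a f N) (ha : 0 < a) (hp : N ≤ p) (hq : N ≤ q)
    (hpq : φ p ≠ φ q) {s : ℕ} (hs : f q = f p + s) {x : ℕ} (hx : 0 < x) (hc : φ x = φ p) (i : ℕ)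
    (hi : x + i * s < f p + s) : φ (x + i * s) = φ p := by
  induction i with
  | zero => simpa using hc
  | succ i ih =>
    have hsucc : x + (i + 1) * s = x + i * s + s := by ring
    rw [hsucc]
    exact h.color_add ha hp hq hpq hs (by omega) (by omega) (ih (by omega))

lemma color_eq_of_persistent (h : NoMonoSol φ a f N) (ha : 0 < a) (hf : StrictMono f) {P : ℕ}
    (persistent : ∀ t, P ≤ t → φ t ≠ φ (t + 1) → ∀ q, t < q → q ≤ 2 * t → φ q = φ (t + 1))
    (hp : N ≤ p) (hpp : φ p ≠ φ (p + 1)) {s : ℕ} (hs : f (p + 1) = f p + s) {y : ℕ} (hy : 0 < y)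
    (hPy : P ≤ y) (hc : φ y = φ p) {x : ℕ} (hyx : y + s ≤ x) (hxp : x < f p) : φ x = φ p := by
  have hs0 : 0 < s := by have := hf (lt_add_one p); omega
  have color_eq := h.color_add_mul ha hp (by omega) hpp hs hy hc
  by_contra hx
  obtain ⟨i, hi, hix, hxi⟩ : ∃ i, 1 ≤ i ∧ y + i * s ≤ x ∧ x < y + (i + 1) * s := by
    have hdm := Nat.div_add_mod' (x - y) s
    have hmod := Nat.mod_lt (x - y) hs0
    refine ⟨(x - y) / s, (Nat.one_le_div_iff hs0).2 (by omega), by omega, ?_⟩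
    rw [add_one_mul]
    omega
  have hcolor := color_eq i (by omega)
  have hnext := color_eq (i + 1) (by rw [add_one_mul]; omega)
  obtain ⟨t, hit, htx, ht, ht'⟩ := exists_last_eq (φ := φ) hix (by rwa [hcolor])
  rw [hcolor] at ht ht'
  have hsi : s ≤ i * s := Nat.le_mul_of_pos_left s hi
  rw [add_one_mul] at hxi hnext
  -- As `t` is at least `s`, the new colour lasts beyond the next term of the progression.
  have hlast := persistent t (by omega) (ht.trans_ne ht'.symm) (y + (i * s + s)) (by omega)
    (by omega)
  exact ht' (hlast.symm.trans hnext)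

lemma isPeriodUpTo_sub (h : NoMonoSol φ a f N) (ha : 0 < a) (hf : StrictMono f) {p' q' R : ℕ}
    (hp : N ≤ p) (hpp' : p < p') (hφp : φ p ≠ φ p') (hq : N ≤ q) (hqq' : q < q')
    (hφq : φ q ≠ φ q') (hpq : φ p ≠ φ q) (hRp : R ≤ f p) (hRq : R ≤ f q)
    (hR : f p' - f p + (f q' - f q) ≤ R) : IsPeriodUpTo φ R (f p' - f p) := by
  have hfp := hf hpp'
  have hfq := hf hqq'
  obtain ⟨s, hs⟩ := Nat.exists_eq_add_of_le hfp.le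
  obtain ⟨d, hd⟩ := Nat.exists_eq_add_of_le hfq.le
  have up : ∀ x, 0 < x → x + s ≤ R → φ x = φ p → φ (x + s) = φ p :=
    fun x hx hxR => h.color_add ha hp (by omega) hφp hs hx (by omega)
  have down : ∀ x, 0 < x → x + d ≤ R → φ (x + d) = φ p → φ x = φ p := by
    intro x hx hxR hc
    by_contra hxp
    have := h.color_add ha hq (by omega) hφq hd hx (by omega) (by omega)
    omega
  intro x y hx _ hy hyR hxy
  obtain rfl : y = x + s := by omega
  have hiff : φ x = φ p ↔ φ (x + s) = φ p :=
    ⟨up x hx hyR, mem_of_add_mem (A := {x | φ x = φ p}) (by omega) (by omega) up down hx hyR⟩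
  omega

lemma isPeriodUpTo_sub_of_mem_Icc (h : NoMonoSol φ a f N) (ha : 0 < a) (hf : StrictMono f)
    {r L R : ℕ} (hr : 0 < r) (hNp : N ≤ p) (hpq : p ≤ q) (hp : φ p ≠ φ (p + 1))
    (hq : φ q ≠ φ (q + 1)) (hφpq : φ p ≠ φ q) (hLp : f (p + r) ≤ f p + L)
    (hLq : f (q + 1) ≤ f q + L) (hLR : 2 * L ≤ R) (hR : R ≤ f p) {i j : ℕ}
    (hi : i ∈ Set.Icc p (p + r)) (hj : j ∈ Set.Icc p (p + r)) :
    IsPeriodUpTo φ R (f j - f i) := by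
  have bounds : ∀ i ∈ Set.Icc p (p + r), f p ≤ f i ∧ f i ≤ f p + L := fun i hi =>
    ⟨hf.monotone hi.1, (hf.monotone hi.2).trans hLp⟩
  have hfpq : f p ≤ f q := hf.monotone hpq
  have of_lt : ∀ i ∈ Set.Icc p (p + r), ∀ j ∈ Set.Icc p (p + r), i < j → φ i ≠ φ j →
      IsPeriodUpTo φ R (f j - f i) := by
    intro i hi j hj hij hφ
    have hfi := bounds i hi
    have hfj := bounds j hj
    have hfp := bounds (p + 1) ⟨by omega, by omega⟩
    have hNi : N ≤ i := hNp.trans hi.1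
    by_cases hip : φ i = φ p
    · exact h.isPeriodUpTo_sub ha hf hNi hij hφ (by omega) (lt_add_one q) hq (by omega)
        (by omega) (by omega) (by omega)
    · exact h.isPeriodUpTo_sub ha hf hNi hij hφ hNp (lt_add_one p) hp hip
        (by omega) (by omega) (by omega)
  have of_ne : ∀ i ∈ Set.Icc p (p + r), ∀ j ∈ Set.Icc p (p + r), φ i ≠ φ j →
      IsPeriodUpTo φ R (f j - f i) := by
    intro i hi j hj hφ
    rcases lt_trichotomy i j with hij | rfl | hij
    · exact of_lt i hi j hj hij hφ
    · exact absurd rfl hφ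
    · exact neg_sub (f i : ℤ) (f j) ▸ (of_lt j hj i hi hij hφ.symm).neg
  by_cases hφ : φ i = φ j
  · obtain ⟨l, hl, hil⟩ : ∃ l ∈ Set.Icc p (p + r), φ i ≠ φ l := by
      by_cases hip : φ i = φ p
      · exact ⟨p + 1, ⟨by omega, by omega⟩, hip ▸ hp⟩
      · exact ⟨p, ⟨by omega, by omega⟩, hip⟩
    have hsum : |(f j - f l : ℤ)| + |(f i - f l : ℤ)| ≤ R := by
      have hfi := bounds i hi
      have hfj := bounds j hj
      have hfl := bounds l hl
      have hjl : |(f j - f l : ℤ)| ≤ L := abs_le.2 ⟨by omega, by omega⟩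
      have hil : |(f i - f l : ℤ)| ≤ L := abs_le.2 ⟨by omega, by omega⟩
      omega
    rw [← sub_sub_sub_cancel_right (f j : ℤ) (f i) (f l)]
    exact (of_ne l hl j hj (hφ ▸ hil.symm)).sub (of_ne l hl i hi hil.symm) hsum
  · exact of_ne i hi j hj hφ

end Shift

section Power

variable {φ : ℕ → Fin 2} {a k n N : ℕ}

lemma exists_dvd_color_eq (h : NoMonoSol φ a (fun z => (a + 1) * k * z ^ n) N) (ha : 0 < a)
    (hk : 0 < k) (hn : n ≠ 0) {g : ℕ} (hg : 0 < g) (c : Fin 2) (M : ℕ) :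
    ∃ x, M ≤ x ∧ 0 < x ∧ g ∣ x ∧ φ x = c := by
  set z := g * (M + N + 1)
  have hzle : M + N + 1 ≤ z := Nat.le_mul_of_pos_left _ hg
  have hgz : g ∣ z := dvd_mul_right _ _
  have hx : z ≤ a * k * z ^ n :=
    (Nat.le_self_pow hn z).trans (Nat.le_mul_of_pos_left _ (by positivity))
  have hne := h (a * k * z ^ n) (a * k * z ^ n) z (by omega) (by omega) (by omega) (by ring) rfl
  by_cases hc : φ z = c
  · exact ⟨z, by omega, by omega, hgz, hc⟩
  · exact ⟨a * k * z ^ n, by omega, by omega, (dvd_pow hgz hn).mul_left _, by omega⟩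

lemma frequently_color_change (h : NoMonoSol φ a (fun z => (a + 1) * k * z ^ n) N) (ha : 0 < a)
    (hk : 0 < k) (hn : n ≠ 0) : ∃ᶠ p in atTop, φ p ≠ φ (p + 1) := by
  refine frequently_atTop.2 fun M => ?_
  obtain ⟨x, hxM, -, -, hx⟩ := h.exists_dvd_color_eq ha hk hn one_pos 0 M
  obtain ⟨y, hyx, -, -, hy⟩ := h.exists_dvd_color_eq ha hk hn one_pos 1 x
  obtain ⟨p, hxp, -, hp, hp'⟩ := exists_last_eq (φ := φ) hyx (by rw [hx, hy]; decide)
  exact ⟨p, hxM.trans hxp, hp.trans_ne hp'.symm⟩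

lemma isPeriodUpTo_factorial {K p q L : ℕ} (h : NoMonoSol φ a (fun z => K * z ^ n) N)
    (ha : 0 < a) (hK : 0 < K) (hn : n ≠ 0) (hNp : N ≤ p) (hpq : p ≤ q) (hp : φ p ≠ φ (p + 1))
    (hq : φ q ≠ φ (q + 1)) (hφpq : φ p ≠ φ q) (hLp : K * (p + n) ^ n ≤ K * p ^ n + L)
    (hLq : K * (q + 1) ^ n ≤ K * q ^ n + L) (hLR : 2 ^ n * L ≤ K * p ^ n) :
    IsPeriodUpTo φ (K * p ^ n) (K * n.factorial : ℕ) := by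
  have hf : StrictMono fun z : ℕ => K * z ^ n := (Nat.pow_left_strictMono hn).const_mul hK
  have h2L : 2 * L ≤ K * p ^ n := le_trans (by gcongr; exact Nat.le_self_pow hn 2) hLR
  obtain ⟨m, rfl⟩ := Nat.exists_eq_add_one_of_ne_zero hn
  have hdiff : ∀ i : ℕ, fwdDiff 1 (fun z : ℤ => K * z ^ (m + 1)) (p + i • 1) =
      (K * (p + (i + 1)) ^ (m + 1) : ℕ) - (K * (p + i) ^ (m + 1) : ℕ) := fun i => by
    simp [fwdDiff, add_assoc]
  have hperiod := IsPeriodUpTo.fwdDiff_iter (φ := φ) (R := K * p ^ (m + 1)) (n := m) (L := L)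
    (g := fwdDiff 1 fun z : ℤ => K * z ^ (m + 1)) (u := p) (v := 1) (fun i hi => ?_)
    (fun i hi => ?_) (le_trans (by gcongr <;> omega) hLR)
  · rw [fwdDiff_iter_fwdDiff_const_mul_pow] at hperiod
    exact_mod_cast hperiod
  · rw [hdiff]
    exact h.isPeriodUpTo_sub_of_mem_Icc ha hf m.succ_pos hNp hpq hp hq hφpq hLp hLq h2L le_rfl
      ⟨by omega, by omega⟩ ⟨by omega, by omega⟩
  · have h0 : K * p ^ (m + 1) ≤ K * (p + i) ^ (m + 1) := by gcongr; omega
    have h1 : K * (p + i) ^ (m + 1) ≤ K * (p + (i + 1)) ^ (m + 1) := by gcongr; omega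
    have h2 : K * (p + (i + 1)) ^ (m + 1) ≤ K * (p + (m + 1)) ^ (m + 1) := by gcongr
    rw [hdiff, abs_le]
    omega

lemma eventually_isPeriodUpTo_factorial {K : ℕ} (h : NoMonoSol φ a (fun z => K * z ^ n) N)
    (ha : 0 < a) (hK : 0 < K) (hn : n ≠ 0) :
    ∀ᶠ p in atTop, ∀ q, p ≤ q → q ≤ 2 * p → φ p ≠ φ (p + 1) → φ q ≠ φ (q + 1) → φ p ≠ φ q →
      IsPeriodUpTo φ (K * p ^ n) (K * n.factorial : ℕ) := by
  filter_upwards [eventually_ge_atTop N,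
    eventually_mul_add_pow_le_add_div K (C := 2 ^ n) (by positivity) n n,
    eventually_forall_ge_atTop.2
      (eventually_mul_add_pow_le_add_div K (C := 2 ^ n * 2 ^ n) (by positivity) 1 n)]
    with p hNp hLp hLq q hpq hqp hp hq hφpq
  -- The second factor `2 ^ n` compensates for `q ≤ 2 * p`.
  have hdiv : K * q ^ n / (2 ^ n * 2 ^ n) ≤ K * p ^ n / 2 ^ n := by
    calc K * q ^ n / (2 ^ n * 2 ^ n) ≤ K * (2 * p) ^ n / (2 ^ n * 2 ^ n) := by gcongr
      _ = 2 ^ n * (K * p ^ n) / (2 ^ n * 2 ^ n) := by rw [mul_pow, mul_left_comm]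
      _ = K * p ^ n / 2 ^ n := Nat.mul_div_mul_left _ _ (by positivity)
  exact h.isPeriodUpTo_factorial ha hK hn hNp hpq hp hq hφpq hLp
    ((hLq q hpq).trans (by gcongr)) (Nat.mul_div_le _ _)

lemma eventually_color_eq_of_color_change (h : NoMonoSol φ a (fun z => (a + 1) * k * z ^ n) N)
    (ha : 0 < a) (hk : 0 < k) (hn : n ≠ 0) :
    ∀ᶠ p in atTop, φ p ≠ φ (p + 1) → ∀ q, p < q → q ≤ 2 * p → φ q = φ (p + 1) := by
  have hg : 0 < (a + 1) * k * n.factorial := by positivity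
  obtain ⟨x, -, hx, hgx, hφx⟩ := h.exists_dvd_color_eq ha hk hn hg 0 0
  obtain ⟨y, -, hy, hgy, hφy⟩ := h.exists_dvd_color_eq ha hk hn hg 1 0
  filter_upwards [h.eventually_isPeriodUpTo_factorial ha (by positivity) hn, eventually_ge_atTop x,
    eventually_ge_atTop y] with p hperiod hxp hyp hp q hpq hqp
  by_contra hq
  obtain ⟨t, hpt, htq, ht, ht'⟩ := exists_last_eq (Nat.succ_le_of_lt hpq) hq
  have hpR : p ≤ (a + 1) * k * p ^ n :=
    (Nat.le_self_pow hn p).trans (Nat.le_mul_of_pos_left _ (by positivity))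
  have hφxy := (hperiod t (by omega) (by omega) hp (ht.trans_ne ht'.symm) (ht ▸ hp)).eq_of_dvd
    hx (by omega) hgx hy (by omega) hgy
  exact absurd (hφx.symm.trans (hφxy.trans hφy)) (by decide)

end Power

end NoMonoSol

lemma not_noMonoSol {φ : ℕ → Fin 2} {a k n N : ℕ} (ha : 0 < a) (hk : 0 < k) (hn : n ≠ 0) :
    ¬ NoMonoSol φ a (fun z => (a + 1) * k * z ^ n) N := by
  intro h
  have hf : StrictMono fun z : ℕ => (a + 1) * k * z ^ n :=
    (Nat.pow_left_strictMono hn).const_mul (by positivity)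
  obtain ⟨P, persistent⟩ := eventually_atTop.1 (h.eventually_color_eq_of_color_change ha hk hn)
  choose y hPy hy _ hφy using fun c => h.exists_dvd_color_eq ha hk hn one_pos c P
  obtain ⟨p, hp, hpow, hyp, hNp⟩ := ((h.frequently_color_change ha hk hn).and_eventually
    ((eventually_mul_add_pow_le (2 * (a + 1)) 1 n).and
    ((eventually_all.2 fun c => eventually_ge_atTop (2 * y c)).and (eventually_ge_atTop N)))).exists
  have hyp := hyp (φ p)
  have hy0 := hy (φ p)
  obtain ⟨s, hs⟩ := Nat.exists_eq_add_of_le (hf.monotone (Nat.le_add_right p 1))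
  set x := a * k * p ^ n with hx
  have hkx : k * p ^ n ≤ x := by
    rw [hx, mul_assoc]
    exact Nat.le_mul_of_pos_left _ ha
  have hpk : p ≤ k * p ^ n := (Nat.le_self_pow hn p).trans (Nat.le_mul_of_pos_left _ hk)
  have hfp : (a + 1) * k * p ^ n = x + k * p ^ n := by ring
  have hgap : 2 * s ≤ k * p ^ n := by
    have := Nat.mul_le_mul_left k hpow
    linarith
  have hφx : φ x = φ p := h.color_eq_of_persistent ha hf persistent hNp hp hs hy0 (hPy (φ p))
    (hφy (φ p)) (by omega) (by simp only [hfp]; omega)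
  exact h x x p (by omega) (by omega) hNp (by rw [hx]; ring) rfl hφx

/-- Let `a` and `n` be positive integers with `n ≥ 2`. Then the equation
`a·x + y = z^n` is 2-Ramsey: every 2-colouring of the positive integers admits infinitely many
monochromatic solutions. -/
theorem stmt_1 (a n : ℕ) (ha : 0 < a) (hn : 2 ≤ n) :
    ∀ φ : ℕ → Fin 2,
      {w : ℕ × ℕ × ℕ | 0 < w.1 ∧ 0 < w.2.1 ∧ 0 < w.2.2 ∧
        φ w.1 = φ w.2.1 ∧ φ w.1 = φ w.2.2 ∧
        a * w.1 + w.2.1 = w.2.2 ^ n}.Infinite := by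
  intro φ hfin
  obtain ⟨b, hb⟩ : ∃ b, b = a * (a + 1) := ⟨_, rfl⟩
  have hb0 : 0 < b := hb ▸ by positivity
  obtain ⟨N, hN⟩ := (hfin.image fun w => w.2.2).bddAbove
  refine not_noMonoSol (φ := fun u => φ (b * u)) (k := b ^ (n - 2)) (n := n) (N := N + 1) ha
    (by positivity) (by omega) fun x y z hx hy hz hxyz hxy hxz => ?_
  have hsol : a * (b * x) + b * y = (b * z) ^ n := by
    obtain ⟨m, rfl⟩ := Nat.exists_eq_add_of_le' hn
    calc a * (b * x) + b * y = b * (a * x + y) := by ring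
      _ = a * (a + 1) * b ^ (m + 1) * z ^ (m + 2) := by rw [hxyz, Nat.add_sub_cancel]; ring
      _ = (b * z) ^ (m + 2) := by rw [← hb]; ring
  have hzN : b * z ≤ N := hN ⟨(b * x, b * y, b * z),
    ⟨by positivity, by positivity, Nat.mul_pos hb0 (by omega), hxy, hxz, hsol⟩, rfl⟩
  have : z ≤ b * z := Nat.le_mul_of_pos_left z hb0
  omega
end

section
/- Let p ∈ ℤ[z] be a polynomial of degree at least 2 with positive leading coefficient, and let a, b be positive integers with gcd(a,b) = 1. Suppose there exist positive integers d and u and integers t and v such that: (1) (a+b)·t ≡ p(t) (mod d); (2) for every integer k with k ≡ t (mod d), a divides p(k+d) − p(k); (3) for every integer k with k ≡ t (mod d), setting m = (p(k+d) − p(k))/a, one has u ∣ m, and setting m' = m/u, m' is odd and gcd(a, m') = gcd(b, m') = gcd(u, m') = 1; (4) p(v) ≡ (a+b)·v (mod u); (5) for every integer k with k ≡ t (mod d), p(k) ≡ (a+b)·v (mod u); (6) for all integers j, k with j ≡ v (mod u) and k ≡ t (mod d), b divides p(k) − a·j. Then the equation a·x + b·y = p(z) is 2-Ramsey. -/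
/-!
Call `k` in the class of `t` modulo `d` a switch if `k` and `k + d` have different colours. In a
colouring without large monochromatic solutions, trading a solution of `a x + b y = p(k)` for one of
`a x' + b y = p(k + d)` shows that a switch at `k` propagates one colour, on the class of `v` modulo
`u`, in steps of `u m'` with `m' = (p(k + d) - p(k)) / (a u)`. Two switches in opposite directions
at comparable points propagate the same colour forwards and backwards, so by Euclid's algorithm the
colouring of an initial segment of the class of `v` is periodic, with odd period dividing `m'`.
Solving `a r + b s = e` modulo an odd number always produces residues `r`, `s` of the same colour,
hence a monochromatic solution.

So the colours never alternate among comparable points of the class of `t`. Solving the equation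
with `x` close to a switch `k` then gives `y₁ < y₂`, both of order `p(k)`, coloured oppositely to
`k < k + d`; a solution for `p(k + d)` with `x` and `y` nearly equal lies between `k + d` and `y₁`
and must have the colour of `k + d`. Without large switches the class of `t` is eventually
monochromatic and contains solutions.
-/

section Periodicity

variable {P : ℕ → Prop} {A B M : ℕ}

-- The closure properties for `(A, B)` pass to `(A, B - A)` or `(A - B, B)`: this is Euclid's
-- algorithm, which stops at `A = B = gcd A B`.
theorem iff_add_gcd_of_closed (hA : 0 < A) (hB : 0 < B) (hM : A + B ≤ M)
    (hadd : ∀ i, i + B < M → P i → P (i + B)) (hsub : ∀ i, i + A < M → P (i + A) → P i)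
    {i : ℕ} (hi : i + A.gcd B < M) : P (i + A.gcd B) ↔ P i := by
  induction hn : A + B using Nat.strong_induction_on generalizing A B with
  | _ n ih =>
    rcases lt_trichotomy A B with hlt | rfl | hlt
    · rw [← Nat.gcd_sub_self_right hlt.le] at hi ⊢
      refine ih B (by omega) hA (by omega) (by omega) (fun j hj hPj => ?_) hsub hi (by omega)
      by_cases hjB : j + B < M
      · exact hsub _ (by omega) (by convert hadd j hjB hPj using 1; omega)
      · convert hadd (j - A) (by omega) (hsub _ (by omega) (by convert hPj using 1; omega)) using 1
        omega
    · rw [Nat.gcd_self] at hi ⊢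
      exact ⟨hsub i hi, hadd i hi⟩
    · rw [← Nat.gcd_sub_self_left hlt.le] at hi ⊢
      refine ih A (by omega) (by omega) hB (by omega) hadd (fun j hj hPj => ?_) hi (by omega)
      by_cases hjA : j + A < M
      · exact hsub j hjA (by convert hadd _ (by omega) hPj using 1; omega)
      · convert hadd (j - B) (by omega) (hsub _ (by omega) (by convert hPj using 1; omega)) using 1
        omega

theorem iff_mod_of_iff_add {g : ℕ} (h : ∀ i, i + g < M → (P (i + g) ↔ P i)) {i : ℕ}
    (hi : i < M) : P i ↔ P (i % g) := by
  induction i, g using Nat.mod.inductionOn with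
  | ind i g hg ih =>
    rw [Nat.mod_eq_sub_mod hg.2, ← ih h (by omega), ← h (i - g) (by omega), Nat.sub_add_cancel hg.2]
  | base i g hg =>
    rw [Nat.mod_eq, if_neg hg]

end Periodicity

theorem even_natCard_of_image_eq_compl {α : Type*} {f : α → α} (hf : f.Injective) {S : Set α}
    (hS : f '' S = Sᶜ) : Even (Nat.card α) := by
  rcases finite_or_infinite α with _ | _
  · exact ⟨S.ncard, by rw [← Set.ncard_add_ncard_compl S, ← hS, Set.ncard_image_of_injective S hf]⟩
  · simp

theorem exists_mul_add_mul_eq_and_iff {R : Type*} [Ring R] (hR : Odd (Nat.card R)) {a b : R}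
    (ha : IsUnit a) (hb : IsUnit b) (e : R) (Q : R → Prop) :
    ∃ r s, a * r + b * s = e ∧ (Q r ↔ Q s) := by
  obtain ⟨a, rfl⟩ := ha
  obtain ⟨b, rfl⟩ := hb
  by_contra h
  let σ : Equiv.Perm R := a.mulLeft.trans ((Equiv.subLeft e).trans b⁻¹.mulLeft)
  have hσ (r : R) : ¬(Q r ↔ Q (σ r)) := fun hr => h ⟨r, σ r, by simp [σ], hr⟩
  refine Nat.not_even_iff_odd.2 hR (even_natCard_of_image_eq_compl σ.injective (S := {r | Q r}) ?_)
  rw [σ.image_eq_preimage_symm]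
  ext s
  have := hσ (σ.symm s)
  rw [σ.apply_symm_apply, not_iff] at this
  exact (not_iff_comm.1 this).symm

section LinearEquation

variable {a b g r s n : ℤ}

theorem exists_mul_add_mul_eq_of_dvd (hab : IsCoprime a b) (hn : g ∣ n - (a * r + b * s)) :
    ∃ x y, g ∣ x - r ∧ g ∣ y - s ∧ a * x + b * y = n := by
  obtain ⟨e, he⟩ := hn
  obtain ⟨α, β, hαβ⟩ := hab
  exact ⟨r + g * (α * e), s + g * (β * e), ⟨α * e, by ring⟩, ⟨β * e, by ring⟩,
    by linear_combination g * e * hαβ - he⟩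

theorem exists_mul_add_mul_eq_mem_Ico (hb : 0 < b) (hg : 0 < g) (hab : IsCoprime a b)
    (hn : g ∣ n - (a * r + b * s)) (L : ℤ) :
    ∃ x y, g ∣ x - r ∧ g ∣ y - s ∧ a * x + b * y = n ∧ x ∈ Set.Ico L (L + b * g) := by
  obtain ⟨x, y, ⟨i, hx⟩, ⟨j, hy⟩, hxy⟩ := exists_mul_add_mul_eq_of_dvd hab hn
  obtain ⟨q, hq, -⟩ := existsUnique_add_zsmul_mem_Ico (mul_pos hb hg) x L
  rw [smul_eq_mul] at hq
  exact ⟨x + q * (b * g), y - q * (a * g), ⟨i + q * b, by linear_combination hx⟩,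
    ⟨j - q * a, by linear_combination hy⟩, by linear_combination hxy, hq⟩

theorem exists_mul_add_mul_eq_balanced (ha : 0 < a) (hb : 0 < b) (hg : 0 < g) (hab : IsCoprime a b)
    (hn : g ∣ n - (a * r + b * s)) :
    ∃ x y, g ∣ x - r ∧ g ∣ y - s ∧ a * x + b * y = n ∧ y ≤ x ∧
      n - a * ((a + b) * g) ≤ (a + b) * y ∧ (a + b) * x ≤ n + b * ((a + b) * g) := by
  obtain ⟨x, y, ⟨i, hx⟩, ⟨j, hy⟩, hxy⟩ := exists_mul_add_mul_eq_of_dvd hab hn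
  obtain ⟨q, ⟨hq₀, hq₁⟩, -⟩ :=
    existsUnique_add_zsmul_mem_Ico (mul_pos (add_pos ha hb) hg) (x - y) 0
  rw [smul_eq_mul] at hq₀ hq₁
  refine ⟨x + q * (b * g), y - q * (a * g), ⟨i + q * b, by linear_combination hx⟩,
    ⟨j - q * a, by linear_combination hy⟩, by linear_combination hxy, by linarith, ?_, ?_⟩
  · have := mul_le_mul_of_nonneg_left hq₁.le ha.le
    linear_combination this - hxy
  · have := mul_le_mul_of_nonneg_left hq₁.le hb.le
    linear_combination this + hxy

end LinearEquation

section Lift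

variable {a b E E' : ℤ} {m m' g : ℕ}

theorem exists_natCast_eq_and_mul_add_mul_eq (ha : 0 < a) (hb : 0 < b) (hab : IsCoprime a b)
    (hg : 0 < g) (hgm : g ≤ m) (hE : a * (a + b) ^ 2 * m ≤ E) (hl : E ≤ E') (hu : E' ≤ E + a * m)
    {r s : ZMod g} (hrs : a * r + b * s = E') :
    ∃ i j : ℕ, (i : ZMod g) = r ∧ (j : ZMod g) = s ∧ a * i + b * j = E' ∧
      a * i ≤ E ∧ a * j ≤ E := by
  obtain ⟨r, rfl⟩ := ZMod.intCast_surjective r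
  obtain ⟨s, rfl⟩ := ZMod.intCast_surjective s
  have hdvd : (g : ℤ) ∣ E' - (a * r + b * s) := by
    rw [← ZMod.intCast_eq_intCast_iff_dvd_sub, ← hrs]
    push_cast
    rfl
  obtain ⟨i, j, hi, hj, hij, hji, hlow, hupp⟩ :=
    exists_mul_add_mul_eq_balanced ha hb (Int.natCast_pos.2 hg) hab hdvd
  have hs : 1 ≤ a + b := by omega
  have hgm' : (g : ℤ) ≤ m := Int.ofNat_le.2 hgm
  have hj₀ : 0 ≤ j := by
    have : a * ((a + b) * g) ≤ a * (a + b) ^ 2 * m := by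
      rw [mul_assoc]
      gcongr
      exact le_self_pow₀ hs two_ne_zero
    exact nonneg_of_mul_nonneg_right (by linarith : 0 ≤ (a + b) * j) (by omega)
  have hiE : a * i ≤ E := by
    have hE' : a * (a * m + b * ((a + b) * m)) ≤ b * E := by
      have hcoef : a + b * (a + b) ≤ b * (a + b) ^ 2 := by
        nlinarith [mul_nonneg (by omega : 0 ≤ b - 1) (by omega : 0 ≤ a), mul_pos ha hb]
      calc a * (a * m + b * ((a + b) * m)) = a * m * (a + b * (a + b)) := by ring
        _ ≤ a * m * (b * (a + b) ^ 2) := by gcongr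
        _ = b * (a * (a + b) ^ 2 * m) := by ring
        _ ≤ b * E := by gcongr
    have : a * ((a + b) * i) ≤ a * (E + a * m + b * ((a + b) * m)) := by
      gcongr
      refine hupp.trans ?_
      gcongr
    refine le_of_mul_le_mul_left (?_ : (a + b) * (a * i) ≤ (a + b) * E) (by omega)
    linarith
  have haj : a * j ≤ a * i := by gcongr
  lift j to ℕ using hj₀
  lift i to ℕ using by omega
  refine ⟨i, j, ?_, ?_, hij, hiE, haj.trans hiE⟩
  · simpa using ((ZMod.intCast_eq_intCast_iff_dvd_sub _ _ g).2 hi).symm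
  · simpa using ((ZMod.intCast_eq_intCast_iff_dvd_sub _ _ g).2 hj).symm

theorem exists_solution_of_closed {P : ℕ → Prop} (ha : 0 < a) (hb : 0 < b) (hab : IsCoprime a b)
    (hm : Odd m) (hm' : 0 < m') (ham : IsCoprime a m) (hbm : IsCoprime b m)
    (hE : a * (a + b) ^ 2 * (m + m') ≤ E)
    (hadd : ∀ i : ℕ, a * (i + m') ≤ E → P i → P (i + m'))
    (hsub : ∀ i : ℕ, a * (i + m) ≤ E → P (i + m) → P i) :
    (∃ i j : ℕ, a * i + b * j = E ∧ ¬P i ∧ ¬P j) ∨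
      ∃ i j : ℕ, a * i + b * j = E + a * m ∧ P i ∧ P j := by
  set g := m.gcd m'
  have hg : 0 < g := Nat.gcd_pos_of_pos_left _ hm.pos
  have hgm : g ∣ m := Nat.gcd_dvd_left m m'
  have hcop (w : ℤ) (hw : IsCoprime w m) : IsUnit (w : ZMod g) :=
    (ZMod.coe_int_isUnit_iff_isCoprime w g).2
      (hw.of_isCoprime_of_dvd_right (Int.natCast_dvd_natCast.2 hgm)).symm
  have hM (i : ℕ) : i < (E / a + 1).toNat ↔ a * i ≤ E := by
    rw [Int.lt_toNat, Int.lt_add_one_iff, Int.le_ediv_iff_mul_le ha, mul_comm]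
  have hsq : 1 ≤ (a + b) ^ 2 := one_le_pow₀ (by omega)
  have hmm' : a * (m + m') ≤ E :=
    (mul_le_mul_of_nonneg_right (le_mul_of_one_le_right ha.le hsq) (by positivity)).trans hE
  have hper (i : ℕ) (hi : a * i ≤ E) : P i ↔ P (i : ZMod g).val := by
    rw [ZMod.val_natCast]
    refine iff_mod_of_iff_add (fun i hi => ?_) ((hM i).2 hi)
    exact iff_add_gcd_of_closed hm.pos hm' ((hM _).2 (by exact_mod_cast hmm')).le
      (fun i hi => hadd i (by exact_mod_cast (hM _).1 hi))
      (fun i hi => hsub i (by exact_mod_cast (hM _).1 hi)) hi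
  have hEm : a * (a + b) ^ 2 * m ≤ E := by
    refine le_trans ?_ hE
    gcongr
    omega
  obtain ⟨r, s, hrs, hiff⟩ := exists_mul_add_mul_eq_and_iff
    (by rw [Nat.card_zmod]; exact hm.of_dvd_nat hgm) (hcop a ham) (hcop b hbm) (E : ZMod g)
    (fun z => P z.val)
  have hlift (E' : ℤ) (hEE' : (E' : ZMod g) = E) (hl : E ≤ E') (hu : E' ≤ E + a * m) :
      ∃ i j : ℕ, a * i + b * j = E' ∧ (P i ↔ P r.val) ∧ (P j ↔ P r.val) := by
    obtain ⟨i, j, rfl, rfl, hij, hi, hj⟩ := exists_natCast_eq_and_mul_add_mul_eq ha hb hab hg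
      (Nat.le_of_dvd hm.pos hgm) hEm hl hu (hrs.trans hEE'.symm)
    exact ⟨i, j, hij, hper i hi, (hper j hj).trans hiff.symm⟩
  have hgm₀ : (m : ZMod g) = 0 := (ZMod.natCast_eq_zero_iff m g).2 hgm
  have ham₀ : 0 ≤ a * m := by positivity
  by_cases hr : P r.val
  · obtain ⟨i, j, hij, hi, hj⟩ := hlift (E + a * m) (by simp [hgm₀]) (by omega) le_rfl
    exact .inr ⟨i, j, hij, hi.2 hr, hj.2 hr⟩
  · obtain ⟨i, j, hij, hi, hj⟩ := hlift E rfl le_rfl (by omega)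
    exact .inl ⟨i, j, hij, mt hi.1 hr, mt hj.1 hr⟩

end Lift

section Growth

open Polynomial Filter

theorem eventually_pos_eval_of_leadingCoeff_pos {q : ℤ[X]} (hq : 0 < q.leadingCoeff) :
    ∀ᶠ x in atTop, 0 < q.eval x := by
  set Q : ℝ[X] := (X * q).map (Int.castRingHom ℝ)
  have hdeg : 0 < (X * q).natDegree := by
    rw [natDegree_X_mul (leadingCoeff_ne_zero.1 hq.ne')]
    exact Nat.succ_pos _
  have hQ : Tendsto (fun x => Q.eval x) atTop atTop := by
    refine Q.tendsto_atTop_of_leadingCoeff_nonneg ?_ ?_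
    · rwa [degree_map_eq_of_injective Int.cast_injective, ← natDegree_pos_iff_degree_pos]
    · rw [leadingCoeff_map_of_injective Int.cast_injective]
      simpa using hq.le
  filter_upwards [(hQ.comp tendsto_intCast_atTop_atTop).eventually_gt_atTop 0,
    eventually_gt_atTop 0] with x hx hx₀
  simp only [Q, Function.comp_apply, eval_intCast_map, eq_intCast, Int.cast_pos, eval_mul, eval_X]
    at hx
  exact pos_of_mul_pos_right hx hx₀.le

variable {p : ℤ[X]}

theorem eventually_eval_lt_eval {q : ℤ[X]} (hqp : q.degree < p.degree) (hp : 0 < p.leadingCoeff) :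
    ∀ᶠ x in atTop, q.eval x < p.eval x := by
  have hlead : 0 < (p - q).leadingCoeff := by rwa [leadingCoeff_sub_of_degree_lt hqp]
  simpa using eventually_pos_eval_of_leadingCoeff_pos hlead

theorem abs_eval_le_sum_abs_coeff_mul_pow {R : Type*} [CommRing R] [LinearOrder R]
    [IsStrictOrderedRing R] {q : R[X]} {n : ℕ} (hq : q.natDegree ≤ n) {x : R} (hx : 1 ≤ x) :
    |q.eval x| ≤ (∑ i ∈ Finset.range (n + 1), |q.coeff i|) * x ^ n := by
  have hx₀ : 0 ≤ x := zero_le_one.trans hx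
  rw [eval_eq_sum_range' (Nat.lt_succ_of_le hq), Finset.sum_mul]
  refine (Finset.abs_sum_le_sum_abs _ _).trans (Finset.sum_le_sum fun i hi => ?_)
  rw [abs_mul, abs_pow, abs_of_nonneg hx₀]
  gcongr
  exact Nat.lt_succ_iff.1 (Finset.mem_range.1 hi)

variable (hdeg : 2 ≤ p.natDegree) (hlead : 0 < p.leadingCoeff)
include hdeg hlead

theorem eventually_mul_sub_lt_eval_sub_eval (c : ℤ) :
    ∀ᶠ x in atTop, ∀ y, x < y → c * (y - x) < p.eval y - p.eval x := by
  set P : ℝ[X] := p.map (Int.castRingHom ℝ)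
  have hPdeg : P.natDegree = p.natDegree := natDegree_map_eq_of_injective Int.cast_injective p
  have hP' : Tendsto (fun x => P.derivative.eval x) atTop atTop := by
    refine P.derivative.tendsto_atTop_of_leadingCoeff_nonneg ?_ ?_
    · rw [← natDegree_pos_iff_degree_pos, natDegree_derivative]
      omega
    · rw [leadingCoeff_derivative, leadingCoeff_map_of_injective Int.cast_injective,
        eq_intCast]
      exact mul_nonneg (Int.cast_nonneg hlead.le) (Nat.cast_nonneg _)
  obtain ⟨K, hK⟩ := eventually_atTop.1 (hP'.eventually_gt_atTop c)
  filter_upwards [tendsto_intCast_atTop_atTop.eventually_ge_atTop K] with x hx y hxy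
  have hmvt := (convex_Ici K).mul_sub_lt_image_sub_of_lt_deriv P.continuous.continuousOn
    P.differentiable.differentiableOn (C := c)
    (fun z hz => by rw [P.deriv]; exact hK z (interior_subset hz))
    x hx y (hx.trans (Int.cast_le.2 hxy.le)) (Int.cast_lt.2 hxy)
  simp only [P, eval_intCast_map, eq_intCast] at hmvt
  exact_mod_cast hmvt

theorem eventually_add_mul_add_mul_increment_le (d α β γ ρ : ℤ) :
    ∀ᶠ k in atTop, ∀ l, k ≤ l → l ≤ ρ * k →
      α + β * k + γ * (p.eval (l + d) - p.eval l) ≤ p.eval k := by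
  obtain ⟨n, hn⟩ : ∃ n, p.natDegree = n + 1 := ⟨p.natDegree - 1, by omega⟩
  have hq : (taylor d p - p).natDegree ≤ n := by
    have : (taylor d p - p).degree < p.degree := degree_sub_lt_right (degree_taylor p d)
      (leadingCoeff_ne_zero.1 hlead.ne') (leadingCoeff_taylor d p)
    rw [degree_eq_natDegree (leadingCoeff_ne_zero.1 hlead.ne'), hn] at this
    exact natDegree_le_of_degree_le (Order.le_of_lt_succ this)
  set C₀ : ℤ := ∑ i ∈ Finset.range (n + 1), |(taylor d p - p).coeff i|
  have hQ : (C α + C β * X + C (|γ| * C₀ * |ρ| ^ n) * X ^ n).degree < p.degree := by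
    rw [degree_eq_natDegree (leadingCoeff_ne_zero.1 hlead.ne'), hn]
    refine (?_ : _ ≤ (n : WithBot ℕ)).trans_lt (by exact_mod_cast n.lt_succ_self)
    refine natDegree_le_iff_degree_le.1 ?_
    have : 1 ≤ n := by omega
    compute_degree!
  filter_upwards [eventually_eval_lt_eval hQ hlead, eventually_ge_atTop 1] with k hk hk₁ l hkl hlk
  have hinc : |p.eval (l + d) - p.eval l| ≤ C₀ * |ρ| ^ n * k ^ n := by
    have := abs_eval_le_sum_abs_coeff_mul_pow hq (hk₁.trans hkl)
    rw [eval_sub, taylor_eval] at this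
    refine this.trans ?_
    rw [mul_assoc, ← mul_pow]
    gcongr
    · omega
    · exact hlk.trans (mul_le_mul_of_nonneg_right (le_abs_self ρ) (by omega))
  calc α + β * k + γ * (p.eval (l + d) - p.eval l)
      ≤ α + β * k + |γ| * (C₀ * |ρ| ^ n * k ^ n) := by
        refine add_le_add_right ((le_abs_self _).trans ?_) _
        rw [abs_mul]
        gcongr
    _ ≤ p.eval k := by
        simp only [eval_add, eval_mul, eval_C, eval_X, eval_pow] at hk
        linarith

theorem exists_strictMonoOn_eval_Ici : ∃ K, StrictMonoOn (p.eval ·) (Set.Ici K) := by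
  obtain ⟨K, hK⟩ := eventually_atTop.1 (eventually_mul_sub_lt_eval_sub_eval hdeg hlead 0)
  refine ⟨K, fun x hx y _ hxy => ?_⟩
  simpa using hK x hx y hxy

end Growth

section Colorings

open Filter

theorem exists_color_add_ne {κ : Type*} {c : ℤ → κ} {d t x y : ℤ} (hd : 0 < d) (hx : d ∣ x - t)
    (hy : d ∣ y - t) (hxy : x < y) (hc : c x ≠ c y) :
    ∃ k, d ∣ k - t ∧ x ≤ k ∧ k + d ≤ y ∧ c k = c x ∧ c (k + d) ≠ c x := by
  obtain ⟨i, hi⟩ := dvd_sub hy hx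
  rw [sub_sub_sub_cancel_right] at hi
  lift i to ℕ using (pos_of_mul_pos_right (by omega : 0 < d * i) hd.le).le
  obtain rfl : y = x + d * i := by omega
  clear hy hi
  induction i with
  | zero => simp at hc
  | succ i ih =>
    have hi : x + d * (i + 1 : ℕ) = x + d * i + d := by push_cast; ring
    rw [hi] at hc ⊢
    by_cases hci : c (x + d * i) = c x
    · have hi₀ : 0 ≤ d * (i : ℤ) := by positivity
      have hdvd : d ∣ x + d * i - t := by
        rw [add_sub_right_comm]
        exact dvd_add hx (dvd_mul_right d i)
      exact ⟨x + d * i, hdvd, by omega, le_rfl, hci, hc.symm⟩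
    · have hxi : x < x + d * i :=
        lt_add_of_pos_right x (mul_pos hd (by
          rw [Int.natCast_pos, Nat.pos_iff_ne_zero]; rintro rfl; simp at hci))
      obtain ⟨k, hk, hxk, hki, hck⟩ := ih hxi (Ne.symm hci)
      exact ⟨k, hk, hxk, by omega, hck⟩

/-- The colouring `c` has no monochromatic solution of `a * x + b * y = f z` with `x`, `y`
positive and `z ≥ N`. -/
def AvoidsSolutions {κ : Type*} (c : ℤ → κ) (a b : ℤ) (f : ℤ → ℤ) (N : ℤ) : Prop :=
  ∀ x y z, 0 < x → 0 < y → N ≤ z → a * x + b * y = f z → ¬(c x = c y ∧ c x = c z)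

namespace AvoidsSolutions

variable {c : ℤ → Fin 2} {a b N : ℤ} {f : ℤ → ℤ}

theorem color_add_eq (hc : AvoidsSolutions c a b f N) (hb : 0 < b) {k l x δ : ℤ} (hk : N ≤ k)
    (hl : N ≤ l) (hlk : c l ≠ c k) (hδ : f l = f k + a * δ) (hx : 0 < x) (hxδ : 0 < x + δ)
    (hxk : a * x < f k) (hdvd : b ∣ f k - a * x) (hcx : c x = c k) : c (x + δ) = c k := by
  obtain ⟨y, hy⟩ := hdvd
  have hy₀ : 0 < y := pos_of_mul_pos_right (by omega : 0 < b * y) hb.le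
  have hyk := hc x y k hx hy₀ hk (by linarith)
  have hyl := hc (x + δ) y l hxδ hy₀ hl (by linarith)
  omega

theorem not_opposite_switches (hc : AvoidsSolutions c a b f N) (ha : 0 < a) (hb : 0 < b)
    (hab : IsCoprime a b) {u v E k l k' l' : ℤ} {m m' : ℕ} (hu : 0 < u) (hv : 0 < v)
    (hk : N ≤ k) (hl : N ≤ l) (hk' : N ≤ k') (hl' : N ≤ l')
    (hlk : f l = f k + a * (u * m)) (hlk' : f l' = f k' + a * (u * m'))
    (hm : Odd m) (hm' : 0 < m') (ham : IsCoprime a m) (hbm : IsCoprime b m)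
    (hfk : f k = (a + b) * v + u * E) (hE : a * (a + b) ^ 2 * (m + m') ≤ E) (hkk' : f k ≤ f k')
    (hdvd : ∀ j, u ∣ j - v → b ∣ f k - a * j) (hdvd' : ∀ j, u ∣ j - v → b ∣ f k' - a * j)
    (hcl : c l ≠ c k) (hck' : c k' = c l) : c l' ≠ c k := by
  intro hcl'
  have hlt (i : ℕ) (n : ℕ) (hi : a * (i + n) ≤ E) : a * (v + u * i) < f k := by
    have hn : u * (a * (i + n)) ≤ u * E := by gcongr
    have hbv : 0 < b * v := by positivity
    have hun : 0 ≤ u * a * n := by positivity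
    linarith
  have hpos (i : ℕ) : 0 < v + u * i := by positivity
  have hclass (i : ℕ) : u ∣ v + u * i - v := ⟨i, by ring⟩
  have hsub (i : ℕ) (hi : a * (i + m) ≤ E) (hci : c (v + u * i) = c k) :
      c (v + u * (i + m : ℕ)) = c k := by
    have := hc.color_add_eq hb hk hl hcl hlk (hpos i) (by positivity) (hlt i m hi)
      (hdvd _ (hclass i)) hci
    rwa [Nat.cast_add, mul_add, ← add_assoc]
  have hadd (i : ℕ) (hi : a * (i + m') ≤ E) (hci : c (v + u * i) ≠ c k) :
      c (v + u * (i + m' : ℕ)) ≠ c k := by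
    have := hc.color_add_eq hb hk' hl' (by omega) hlk' (hpos i) (by positivity)
      ((hlt i m' hi).trans_le hkk') (hdvd' _ (hclass i)) (by omega)
    rw [Nat.cast_add, mul_add, ← add_assoc]
    omega
  obtain ⟨i, j, hij, hi, hj⟩ | ⟨i, j, hij, hi, hj⟩ := exists_solution_of_closed
    (P := fun i => c (v + u * i) ≠ c k) ha hb hab hm hm' ham hbm hE hadd
    fun i hi => mt (hsub i hi)
  · rw [not_not] at hi hj
    exact hc _ _ k (hpos i) (hpos j) hk (by linear_combination u * hij - hfk)
      ⟨hi.trans hj.symm, hi⟩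
  · refine hc _ _ l (hpos i) (hpos j) hl (by linear_combination u * hij - hfk - hlk) ?_
    omega

end AvoidsSolutions

/-- Among large integers of the class of `t` modulo `d`, the colouring `c` has no pattern
`α, β, α` with `α ≠ β` at three points whose ratios are at most `r`. -/
def EventuallyNonalternating {κ : Type*} (c : ℤ → κ) (d t r : ℤ) : Prop :=
  ∀ᶠ x₁ in atTop, ∀ x₂ x₃, d ∣ x₁ - t → d ∣ x₂ - t → d ∣ x₃ - t → x₁ < x₂ → x₂ < x₃ →
    x₃ ≤ r * x₁ → c x₁ = c x₃ → c x₂ = c x₁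

end Colorings

section Nonalternation

open Filter

variable {p : Polynomial ℤ} (hdeg : 2 ≤ p.natDegree) (hlead : 0 < p.leadingCoeff)
  {a b d u t v N r : ℤ} (ha : 0 < a) (hb : 0 < b) (hab : IsCoprime a b) (hd : 0 < d) (hu : 0 < u)
  (h3 : ∀ k, d ∣ k - t → ∃ m, p.eval (k + d) - p.eval k = a * (u * m) ∧
    ¬2 ∣ m ∧ IsCoprime a m ∧ IsCoprime b m)

include ha hd hu h3 in
theorem exists_eval_add_eq_of_strictMonoOn {K k : ℤ} (hp : StrictMonoOn (p.eval ·) (Set.Ici K))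
    (hk : K ≤ k) (hkt : d ∣ k - t) :
    ∃ m : ℕ, Odd m ∧ IsCoprime a m ∧ IsCoprime b m ∧
      p.eval (k + d) = p.eval k + a * (u * m) := by
  obtain ⟨m, hm, hm₂, ham, hbm⟩ := h3 k hkt
  have hlt : p.eval k < p.eval (k + d) :=
    hp hk (hk.trans (by omega : k ≤ k + d)) (by omega)
  have hm₀ : 0 < m := by
    rw [← sub_pos, hm, ← mul_assoc] at hlt
    exact pos_of_mul_pos_right hlt (by positivity)
  lift m to ℕ using hm₀.le
  exact ⟨m, by rw [← Nat.not_even_iff_odd, even_iff_two_dvd]; exact_mod_cast hm₂, ham, hbm,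
    by linarith⟩

variable (h5 : ∀ k, d ∣ k - t → u ∣ p.eval k - (a + b) * v)
  (h6 : ∀ j k, u ∣ j - v → d ∣ k - t → b ∣ p.eval k - a * j)
  {c : ℤ → Fin 2} (hc : AvoidsSolutions c a b (p.eval ·) N)

include hdeg hlead ha hb hab hd hu h3 h5 h6 hc

theorem AvoidsSolutions.eventually_not_opposite_switches_of_pos (hv : 0 < v) (hr : 1 ≤ r) :
    ∀ᶠ k in atTop, ∀ k', d ∣ k - t → d ∣ k' - t → k ≤ k' → k' ≤ r * k →
      c (k + d) ≠ c k → c k' = c (k + d) → c (k' + d) ≠ c k := by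
  obtain ⟨K, hK⟩ := exists_strictMonoOn_eval_Ici hdeg hlead
  filter_upwards [eventually_ge_atTop N, eventually_ge_atTop K, eventually_ge_atTop 0,
    eventually_add_mul_add_mul_increment_le hdeg hlead d ((a + b) * v) 0 (2 * (a + b) ^ 2) r]
    with k hN hk hk₀ hgrow k' hkt hkt' hkk' hk'r hck hck'
  obtain ⟨m, hm, ham, hbm, hkd⟩ := exists_eval_add_eq_of_strictMonoOn ha hd hu h3 hK hk hkt
  obtain ⟨m', hm', -, -, hkd'⟩ :=
    exists_eval_add_eq_of_strictMonoOn ha hd hu h3 hK (hk.trans hkk') hkt'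
  obtain ⟨E, hE⟩ := h5 k hkt
  have hbig : a * (a + b) ^ 2 * (m + m') ≤ E := by
    have hgk := hgrow k le_rfl (le_mul_of_one_le_left hk₀ hr)
    have hgk' := hgrow k' hkk' hk'r
    rw [hkd, add_sub_cancel_left] at hgk
    rw [hkd', add_sub_cancel_left] at hgk'
    refine le_of_mul_le_mul_left (?_ : u * (a * (a + b) ^ 2 * (m + m')) ≤ u * E) hu
    linarith
  exact hc.not_opposite_switches ha hb hab hu hv hN (by omega) (by omega) (by omega) hkd hkd' hm
    hm'.pos ham hbm (by linarith) hbig (hK.monotoneOn hk (hk.trans hkk') hkk')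
    (fun j hj => h6 j k hj hkt) (fun j hj => h6 j k' hj hkt') hck hck'

theorem AvoidsSolutions.eventually_not_opposite_switches (hr : 1 ≤ r) :
    ∀ᶠ k in atTop, ∀ k', d ∣ k - t → d ∣ k' - t → k ≤ k' → k' ≤ r * k →
      c (k + d) ≠ c k → c k' = c (k + d) → c (k' + d) ≠ c k := by
  obtain ⟨q, ⟨hq, -⟩, -⟩ := existsUnique_add_zsmul_mem_Ioc hu v 0
  rw [smul_eq_mul] at hq
  refine hc.eventually_not_opposite_switches_of_pos hdeg hlead ha hb hab hd hu h3
    (fun k hk => ?_) (fun j k hj hk => h6 j k ?_ hk) hq hr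
  · obtain ⟨e, he⟩ := h5 k hk
    exact ⟨e - (a + b) * q, by linear_combination he⟩
  · obtain ⟨e, he⟩ := hj
    exact ⟨e + q, by linear_combination he⟩

theorem AvoidsSolutions.eventuallyNonalternating (hr : 1 ≤ r) :
    EventuallyNonalternating c d t r := by
  filter_upwards [eventually_forall_ge_atTop.2
    (hc.eventually_not_opposite_switches hdeg hlead ha hb hab hd hu h3 h5 h6 hr)]
    with x₁ hswitch x₂ x₃ h₁ h₂ h₃ h₁₂ h₂₃ h₁₃ hc₁₃
  by_contra hne
  obtain ⟨k, hkt, hk₁, hk₂, hck, hckd⟩ := exists_color_add_ne hd h₁ h₂ h₁₂ (Ne.symm hne)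
  obtain ⟨k', hkt', hk₁', hk₂', hck', hckd'⟩ := exists_color_add_ne hd h₂ h₃ h₂₃ (hc₁₃ ▸ hne)
  have hkk' : k' ≤ r * k := by
    have : r * x₁ ≤ r * k := by gcongr
    omega
  exact hswitch k hk₁ k' hkt hkt' (by omega) hkk' (by omega) (by omega) (by omega)

end Nonalternation

section Monochromatic

open Filter

theorem frequently_dvd_sub {d : ℤ} (hd : 0 < d) (t : ℤ) : ∃ᶠ z in atTop, d ∣ z - t := by
  refine frequently_atTop.2 fun K => ?_
  obtain ⟨q, ⟨hq, -⟩, -⟩ := existsUnique_add_zsmul_mem_Ico hd t K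
  exact ⟨t + q • d, hq, q, by simp [mul_comm]⟩

theorem EventuallyNonalternating.eventually_color_eq_near_switch {c : ℤ → Fin 2} {d t : ℤ}
    (hc : EventuallyNonalternating c d t 2) (hd : 0 < d) (w : ℤ) :
    ∀ᶠ k in atTop, d ∣ k - t → c (k + d) ≠ c k →
      (∀ x ∈ Set.Icc (k - w) k, d ∣ x - t → c x = c k) ∧
        ∀ x ∈ Set.Icc (k + d) (k + d + w), d ∣ x - t → c x = c (k + d) := by
  obtain ⟨K, hK⟩ := eventually_atTop.1 hc
  filter_upwards [eventually_ge_atTop K, eventually_ge_atTop (K + w),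
    eventually_ge_atTop (2 * w + d), eventually_ge_atTop (d + w)]
    with k hKk hKw hwd hdw hkt hck
  have hkt' : d ∣ k + d - t := by rwa [add_sub_right_comm, dvd_add_self_right]
  refine ⟨fun x hx hxt => ?_, fun x hx hxt => ?_⟩
  · rcases hx.2.eq_or_lt with rfl | hlt
    · rfl
    · have := hK x (by linarith [hx.1]) k (k + d) hxt hkt hkt' hlt (by omega) (by linarith [hx.1])
      omega
  · rcases hx.1.eq_or_lt with rfl | hlt
    · rfl
    · have := hK k hKk (k + d) x hkt hkt' hxt (by omega) hlt (by linarith [hx.2])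
      omega

variable {p : Polynomial ℤ} {a b d t N : ℤ}

theorem dvd_eval_sub_mul_add_mul (h1 : d ∣ p.eval t - (a + b) * t) {k : ℤ} (hk : d ∣ k - t) :
    d ∣ p.eval k - (a * t + b * t) := by
  rw [← add_mul, ← sub_add_sub_cancel _ (p.eval t)]
  exact dvd_add (hk.trans (Polynomial.sub_dvd_eval_sub k t p)) h1

variable (hdeg : 2 ≤ p.natDegree) (hlead : 0 < p.leadingCoeff) (ha : 0 < a) (hb : 0 < b)
  (hab : IsCoprime a b) (hd : 0 < d) (h1 : d ∣ p.eval t - (a + b) * t)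

include hdeg hlead ha hb hab hd h1

theorem eventually_exists_balanced_solution :
    ∀ᶠ z in atTop, d ∣ z - t → ∃ x y, d ∣ x - t ∧ d ∣ y - t ∧ a * x + b * y = p.eval z ∧
      z < y ∧ y ≤ x ∧ p.eval z - a * ((a + b) * d) ≤ (a + b) * y ∧
        (a + b) * x ≤ p.eval z + b * ((a + b) * d) := by
  filter_upwards [eventually_add_mul_add_mul_increment_le hdeg hlead d
    (a * ((a + b) * d) + 1) (a + b) 0 1] with z hgrow hzt
  obtain ⟨x, y, hx, hy, hxy, hyx, hlow, hupp⟩ := exists_mul_add_mul_eq_balanced ha hb hd hab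
    (dvd_eval_sub_mul_add_mul h1 hzt)
  have hzy : (a + b) * z < (a + b) * y := by linarith [hgrow z le_rfl (one_mul z).ge]
  exact ⟨x, y, hx, hy, hxy, lt_of_mul_lt_mul_left hzy (by omega), hyx, hlow, hupp⟩

theorem eventually_exists_solution_add :
    ∀ᶠ k in atTop, d ∣ k - t → ∃ x y, d ∣ x - t ∧ d ∣ y - t ∧ a * x + b * y = p.eval (k + d) ∧
      k + d < y ∧ y ≤ x ∧ p.eval (k + d) ≤ 2 * (a + b) * y ∧ b * x < p.eval k - a * k := by
  filter_upwards [eventually_ge_atTop 0,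
    eventually_forall_ge_atTop.2 (eventually_exists_balanced_solution hdeg hlead ha hb hab hd h1),
    eventually_mul_sub_lt_eval_sub_eval hdeg hlead 0,
    eventually_add_mul_add_mul_increment_le hdeg hlead d
      (b ^ 2 * ((a + b) * d) + 2 * (a * ((a + b) * d)) + 1) ((a + b) * a) b 1]
    with k hk hsol hmono hgrow hkt
  obtain ⟨x, y, hx, hy, hxy, hky, hyx, hlow, hupp⟩ := hsol (k + d) (by omega)
    (by rwa [add_sub_right_comm, dvd_add_self_right])
  have hΔ : 0 < p.eval (k + d) - p.eval k := by simpa using hmono (k + d) (by omega)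
  have hgrow := hgrow k le_rfl (one_mul k).ge
  have hα : 0 ≤ b ^ 2 * ((a + b) * d) := by positivity
  have hα' : 0 ≤ a * ((a + b) * d) := by positivity
  have hβ : 0 ≤ (a + b) * a * k := by positivity
  have hγ : 0 ≤ b * (p.eval (k + d) - p.eval k) := by positivity
  refine ⟨x, y, hx, hy, hxy, hky, hyx, by linarith, ?_⟩
  have hpa : p.eval k ≤ a * p.eval k := le_mul_of_one_le_left (by linarith) ha
  refine lt_of_mul_lt_mul_left (?_ : (a + b) * (b * x) < (a + b) * (p.eval k - a * k)) (by omega)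
  calc (a + b) * (b * x) = b * ((a + b) * x) := mul_left_comm ..
    _ ≤ b * (p.eval (k + d) + b * ((a + b) * d)) := by gcongr
    _ < (a + b) * (p.eval k - a * k) := by linarith

theorem AvoidsSolutions.not_eventually_color_add_eq {κ : Type*} {c : ℤ → κ}
    (hc : AvoidsSolutions c a b (p.eval ·) N) :
    ¬∀ᶠ k in atTop, d ∣ k - t → c (k + d) = c k := by
  intro hconst
  obtain ⟨z, hzt, hz, hN, hconst, hsol⟩ := ((frequently_dvd_sub hd t).and_eventually
    ((eventually_ge_atTop 0).and ((eventually_ge_atTop N).and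
      ((eventually_forall_ge_atTop.2 hconst).and
        (eventually_exists_balanced_solution hdeg hlead ha hb hab hd h1))))).exists
  obtain ⟨x, y, hx, hy, hxy, hzy, hyx, -⟩ := hsol hzt
  have hcz (w : ℤ) (hw : d ∣ w - t) (hzw : z < w) : c w = c z := by
    by_contra hne
    obtain ⟨k, hkt, hzk, -, hck, hckd⟩ := exists_color_add_ne hd hzt hw hzw (Ne.symm hne)
    exact hckd ((hconst k hzk hkt).trans hck)
  have hcx := hcz x hx (by omega)
  exact hc x y z (by omega) (by omega) hN hxy ⟨hcx.trans (hcz y hy hzy).symm, hcx⟩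

variable {c : ℤ → Fin 2} (hc : AvoidsSolutions c a b (p.eval ·) N)
include hc

theorem AvoidsSolutions.eventually_exists_lt_of_switch (hna : EventuallyNonalternating c d t 2) :
    ∀ᶠ k in atTop, d ∣ k - t → c (k + d) ≠ c k →
      ∃ y₁ y₂, d ∣ y₁ - t ∧ d ∣ y₂ - t ∧ 0 < y₁ ∧ y₁ < y₂ ∧ c y₁ = c (k + d) ∧ c y₂ = c k ∧
        p.eval k - a * k ≤ b * y₁ ∧ b * y₂ ≤ p.eval (k + d) := by
  filter_upwards [eventually_ge_atTop N, eventually_ge_atTop (b * d),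
    hna.eventually_color_eq_near_switch hd (b * d),
    eventually_mul_sub_lt_eval_sub_eval hdeg hlead (a * (1 + 2 * b)),
    eventually_add_mul_add_mul_increment_le hdeg hlead d 1 a 0 1]
    with k hN hbd hnear hinc hgrow hkt hck
  have hkt' : d ∣ k + d - t := by rwa [add_sub_right_comm, dvd_add_self_right]
  obtain ⟨hleft, hright⟩ := hnear hkt hck
  obtain ⟨x₁, y₁, hx₁, hy₁, hxy₁, hlow₁, hupp₁⟩ := exists_mul_add_mul_eq_mem_Ico hb hd hab
    (dvd_eval_sub_mul_add_mul h1 hkt) (k - b * d + 1)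
  obtain ⟨x₂, y₂, hx₂, hy₂, hxy₂, hlow₂, hupp₂⟩ := exists_mul_add_mul_eq_mem_Ico hb hd hab
    (dvd_eval_sub_mul_add_mul h1 hkt') (k + d)
  have hcx₁ := hleft x₁ ⟨by omega, by omega⟩ hx₁
  have hcx₂ := hright x₂ ⟨hlow₂, hupp₂.le⟩ hx₂
  have hby₁ : p.eval k - a * k ≤ b * y₁ := by
    have : a * x₁ ≤ a * k := by gcongr; omega
    linarith
  have hby₂ : b * y₂ ≤ p.eval (k + d) := by
    have : 0 ≤ a * x₂ := mul_nonneg ha.le (by omega)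
    linarith
  have hy₁₀ : 0 < y₁ := by
    have := hgrow k le_rfl (one_mul k).ge
    exact pos_of_mul_pos_right (by linarith : 0 < b * y₁) hb.le
  have hy₁₂ : y₁ < y₂ := by
    have hx₁₂ : a * (x₂ - x₁) ≤ a * ((1 + 2 * b) * d) := by gcongr; linarith
    have := hinc (k + d) (by omega)
    exact lt_of_mul_lt_mul_left (by linarith : b * y₁ < b * y₂) hb.le
  have hmono₁ := hc x₁ y₁ k (by omega) hy₁₀ hN hxy₁
  have hmono₂ := hc x₂ y₂ (k + d) (by omega) (by omega) (by omega) hxy₂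
  exact ⟨y₁, y₂, hy₁, hy₂, hy₁₀, hy₁₂, by omega, by omega, hby₁, hby₂⟩

theorem AvoidsSolutions.eventually_color_add_eq
    (hna : ∀ r, 1 ≤ r → EventuallyNonalternating c d t r) :
    ∀ᶠ k in atTop, d ∣ k - t → c (k + d) = c k := by
  filter_upwards [eventually_ge_atTop N, eventually_ge_atTop 0,
    hc.eventually_exists_lt_of_switch hdeg hlead ha hb hab hd h1 (hna 2 one_le_two),
    eventually_forall_ge_atTop.2 (hna (2 * (a + b)) (by omega)),
    eventually_exists_solution_add hdeg hlead ha hb hab hd h1] with k hN hk hswitch hna hsol hkt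
  by_contra hck
  obtain ⟨y₁, y₂, hy₁, hy₂, hy₁₀, hy₁₂, hcy₁, hcy₂, hby₁, hby₂⟩ := hswitch hkt hck
  obtain ⟨x, y, hx, hy, hxy, hky, hyx, hlow, hupp⟩ := hsol hkt
  have hxy₁ : x < y₁ := lt_of_mul_lt_mul_left (hupp.trans_le hby₁) hb.le
  have hyy₂ : y₂ ≤ 2 * (a + b) * y :=
    (le_mul_of_one_le_left (by omega) hb).trans (hby₂.trans hlow)
  have hcol (w : ℤ) (hw : d ∣ w - t) (hyw : y ≤ w) (hwx : w ≤ x) : c w = c (k + d) := by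
    have hw₂ : 2 * (a + b) * y ≤ 2 * (a + b) * w := by gcongr
    have := hna w (by omega) y₁ y₂ hw hy₁ hy₂ (by omega) hy₁₂ (hyy₂.trans hw₂)
    omega
  have hcx := hcol x hx hyx le_rfl
  exact hc x y (k + d) (by omega) (by omega) (by omega) hxy
    ⟨hcx.trans (hcol y hy le_rfl hyx).symm, hcx⟩

end Monochromatic

theorem stmt_2_general (p : Polynomial ℤ) (hdeg : 2 ≤ p.natDegree) (hlead : 0 < p.leadingCoeff)
    (a b : ℤ) (ha : 0 < a) (hb : 0 < b) (hab : IsCoprime a b)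
    (d u : ℤ) (hd : 0 < d) (hu : 0 < u) (t v : ℤ)
    (h1 : d ∣ p.eval t - (a + b) * t)
    (h3 : ∀ k : ℤ, d ∣ k - t → ∃ m' : ℤ, p.eval (k + d) - p.eval k = a * (u * m') ∧
      ¬ (2 ∣ m') ∧ IsCoprime a m' ∧ IsCoprime b m')
    (h5 : ∀ k : ℤ, d ∣ k - t → u ∣ p.eval k - (a + b) * v)
    (h6 : ∀ j k : ℤ, u ∣ j - v → d ∣ k - t → b ∣ p.eval k - a * j) :
    ∀ φ : ℕ → Fin 2,
      {w : ℕ × ℕ × ℕ | 0 < w.1 ∧ 0 < w.2.1 ∧ 0 < w.2.2 ∧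
        φ w.1 = φ w.2.1 ∧ φ w.1 = φ w.2.2 ∧
        a * w.1 + b * w.2.1 = p.eval (w.2.2 : ℤ)}.Infinite := by
  intro φ hfin
  obtain ⟨N, hN⟩ := (hfin.image fun w => w.2.2).bddAbove
  have hc : AvoidsSolutions (fun x => φ x.toNat) a b (p.eval ·) (N + 1) := by
    intro x y z hx hy hz hxyz ⟨hcxy, hcxz⟩
    lift x to ℕ using hx.le
    lift y to ℕ using hy.le
    lift z to ℕ using by omega
    have hz₀ : 0 < z := by omega
    have hzN : z ≤ N := hN ⟨(x, y, z),
      ⟨Int.natCast_pos.1 hx, Int.natCast_pos.1 hy, hz₀, hcxy, hcxz, hxyz⟩, rfl⟩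
    omega
  have hna (r : ℤ) (hr : 1 ≤ r) : EventuallyNonalternating (fun x => φ x.toNat) d t r :=
    hc.eventuallyNonalternating hdeg hlead ha hb hab hd hu h3 h5 h6 hr
  exact hc.not_eventually_color_add_eq hdeg hlead ha hb hab hd h1
    (hc.eventually_color_add_eq hdeg hlead ha hb hab hd h1 hna)

/-- **Main theorem.** Let `p ∈ ℤ[z]` have degree at least 2 and positive leading
coefficient, and let `a, b` be positive coprime integers. Suppose there exist positive integers
`d, u` and integers `t, v` satisfying the six technical conditions (1)–(6) of the paper. Then
the equation `a·x + b·y = p(z)` is 2-Ramsey. Condition (3), that `m = (p(k+d) − p(k))/a` is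
divisible by `u` with `m' = m/u` odd and coprime to `a`, `b` and `u`, is expressed via the
existence of such an `m'` with `p(k+d) − p(k) = a·(u·m')`. -/
theorem stmt_2 (p : Polynomial ℤ) (hdeg : 2 ≤ p.natDegree) (hlead : 0 < p.leadingCoeff)
    (a b : ℤ) (ha : 0 < a) (hb : 0 < b) (hab : IsCoprime a b)
    (d u : ℤ) (hd : 0 < d) (hu : 0 < u) (t v : ℤ)
    (h1 : d ∣ p.eval t - (a + b) * t)
    (h2 : ∀ k : ℤ, d ∣ k - t → a ∣ p.eval (k + d) - p.eval k)
    (h3 : ∀ k : ℤ, d ∣ k - t → ∃ m' : ℤ, p.eval (k + d) - p.eval k = a * (u * m') ∧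
      ¬ (2 ∣ m') ∧ IsCoprime a m' ∧ IsCoprime b m' ∧ IsCoprime u m')
    (h4 : u ∣ p.eval v - (a + b) * v)
    (h5 : ∀ k : ℤ, d ∣ k - t → u ∣ p.eval k - (a + b) * v)
    (h6 : ∀ j k : ℤ, u ∣ j - v → d ∣ k - t → b ∣ p.eval k - a * j) :
    ∀ φ : ℕ → Fin 2,
      {w : ℕ × ℕ × ℕ | 0 < w.1 ∧ 0 < w.2.1 ∧ 0 < w.2.2 ∧
        φ w.1 = φ w.2.1 ∧ φ w.1 = φ w.2.2 ∧
        a * w.1 + b * w.2.1 = p.eval (w.2.2 : ℤ)}.Infinite :=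
  stmt_2_general p hdeg hlead a b ha hb hab d u hd hu t v h1
    (fun k hk => let ⟨m', hm', hodd, ham', hbm', _⟩ := h3 k hk; ⟨m', hm', hodd, ham', hbm'⟩) h5 h6
end

section
/- Let a, b, c be positive integers with gcd(a,b) = 1, and let p be a prime with p ∤ a. Write b = p^{pn−ε}·B where ν_p(b) = pn − ε with n a nonnegative integer and ε ∈ {0, 1, ..., p−1}, and B = b / p^{ν_p(b)}. Suppose gcd(a,c) = 1, gcd(B,c) = 1, and there exists an integer t such that t ≡ 0 (mod p^n), c·t^{p−1} ≡ a (mod B), and c·t^{p−1} ≡ b (mod a). Then the equation a·x + b·y = c·z^p is 2-Ramsey. -/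
/-!
Scaling `x`, `y` and `z` by a common factor only changes `c`, which reduces the theorem to coprime
`a` and `b`. The substitution `x = a * b * q + b * u`, `y = a * b * q + a * v`,
`z = a * b * (q + Z)` turns the equation into `u + v = P Z` with `P Z = d * (q + Z) ^ k - e`, to be
solved with `α u = β v = γ Z` for the induced colourings `α`, `β`, `γ`. Suppose that there is no
such solution for large `Z`.

If `z` has colour `r` and `w` has not, then adding `P w - P z` to a number `u ≤ P z` preserves
`α u = r`. As the `k`-th difference of `P` is a constant `n`, the shifts coming from two nearby
opposite changes of `γ` generate all multiples of `n`, and make `α` periodic modulo `n` on a long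
interval. This is impossible, because `α` takes both values on the multiples of `n`; hence the
changes of `γ` are sparse.

On the other hand, `α (a * X) = γ X` and `β (b * Y) = γ Y`, so `a * X + b * Y = P Z` has no
monochromatic solution for `γ` and large `Z`. Applied to `Z = K` and `Z = K + 1`, where `γ` changes
at `K`, this produces two changes of `γ` in a range of bounded ratio.
-/

open Filter

section Closure

variable {G : Type*} [AddCommGroup G] [LinearOrder G] [IsOrderedAddMonoid G]

lemma exists_mem_add_mem_Icc {R x : G} {s : Multiset G} (hs : s ≠ 0) (hsR : ∀ m ∈ s, |m| + |m| ≤ R)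
    (hx : x ∈ Set.Icc 0 R) (hxs : x + s.sum ∈ Set.Icc 0 R) : ∃ m ∈ s, x + m ∈ Set.Icc 0 R := by
  wlog hxR : x + x ≤ R generalizing x s
  · obtain ⟨m, hm, hxm⟩ := this (x := R - x) (s := s.map Neg.neg) (by simpa using hs)
      (by simpa using hsR) ⟨by grind, by grind⟩
      (by rw [Multiset.sum_map_neg']; constructor <;> grind) (by grind)
    obtain ⟨k, hk, rfl⟩ := Multiset.mem_map.mp hm
    exact ⟨k, hk, by grind⟩
  by_cases hpos : ∃ m ∈ s, 0 ≤ m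
  · obtain ⟨m, hm, hm0⟩ := hpos
    have := hsR m hm
    rw [abs_of_nonneg hm0] at this
    exact ⟨m, hm, by grind, by grind⟩
  · obtain ⟨m, hm⟩ := Multiset.exists_mem_of_ne_zero hs
    have hneg : ∀ k ∈ s, k < 0 := by simpa using hpos
    have hneg' : ∀ k ∈ s.map Neg.neg, 0 ≤ k := fun k hk => by
      obtain ⟨l, hl, rfl⟩ := Multiset.mem_map.mp hk
      exact (neg_pos.mpr (hneg l hl)).le
    have hsum : s.sum ≤ m := by
      have := Multiset.single_le_sum (s := s.map Neg.neg) hneg' (-m) (by simpa using hm)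
      rw [Multiset.sum_map_neg'] at this
      exact neg_le_neg_iff.mp this
    exact ⟨m, hm, by grind⟩

lemma mem_of_sub_mem_closure_of_add_mem {M S : Set G} {R : G} (hM : ∀ m ∈ M, |m| + |m| ≤ R)
    (hSR : S ⊆ Set.Icc 0 R) (hS : ∀ x ∈ S, ∀ m ∈ M, x + m ∈ Set.Icc 0 R → x + m ∈ S) {x y : G}
    (hx : x ∈ S) (hy : y ∈ Set.Icc 0 R) (hxy : y - x ∈ AddSubmonoid.closure M) : y ∈ S := by
  obtain ⟨s, hsM, hs⟩ := AddSubmonoid.exists_multiset_of_mem_closure hxy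
  induction hn : s.card generalizing s x with
  | zero => simp_all [sub_eq_zero, eq_comm]
  | succ n ih =>
    obtain ⟨m, hm, hxm⟩ := exists_mem_add_mem_Icc (Multiset.card_pos.mp (by omega))
      (fun k hk => hM k (hsM k hk)) (hSR hx) (by simpa [hs] using hy)
    obtain ⟨s', rfl⟩ := Multiset.exists_cons_of_mem hm
    have hsum : s'.sum = y - (x + m) := by
      rw [← sub_sub, ← hs, Multiset.sum_cons, add_sub_cancel_left]
    refine ih (hS x hx m (hsM m hm) hxm) ?_ s' (fun k hk => hsM k (Multiset.mem_cons_of_mem hk))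
      hsum (by simpa using hn)
    rw [← hsum]
    exact AddSubmonoid.multiset_sum_mem _ _ fun k hk =>
      AddSubmonoid.subset_closure (hsM k (Multiset.mem_cons_of_mem hk))

end Closure

lemma closure_toAddSubmonoid_le_of_pos_of_neg {M : Set ℤ} {d e : ℤ} (hd : d ∈ M) (hd0 : 0 < d)
    (he : e ∈ M) (he0 : e < 0) :
    (AddSubgroup.closure M).toAddSubmonoid ≤ AddSubmonoid.closure M := by
  have hmul : ∀ m ∈ M, ∀ k : ℤ, 0 ≤ k → k * m ∈ AddSubmonoid.closure M := by
    intro m hm k hk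
    lift k to ℕ using hk
    simpa using AddSubmonoid.nsmul_mem _ (AddSubmonoid.subset_closure hm) k
  have hneg : ∀ m ∈ M, -m ∈ AddSubmonoid.closure M := by
    intro m hm
    rcases le_or_gt 0 m with h | h
    · convert add_mem (hmul m hm (-e - 1) (by omega)) (hmul e he m h) using 1
      ring
    · convert add_mem (hmul m hm (d - 1) (by omega)) (hmul d hd (-m) (by omega)) using 1
      ring
  rw [AddSubgroup.closure_toAddSubmonoid, AddSubmonoid.closure_le]
  rintro x (hx | hx)
  · exact AddSubmonoid.subset_closure hx
  · simpa using hneg (-x) hx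

lemma mem_closure_of_forall_dvd {M : Set ℤ} {n : ℤ} (h : ∀ g : ℤ, (∀ m ∈ M, g ∣ m) → g ∣ n) :
    n ∈ AddSubgroup.closure M := by
  obtain ⟨g, hg⟩ := Int.subgroup_cyclic (AddSubgroup.closure M)
  have hmem : ∀ m, m ∈ AddSubgroup.closure M ↔ g ∣ m := fun m => by
    rw [hg, ← AddSubgroup.zmultiples_eq_closure, Int.mem_zmultiples_iff]
  exact (hmem n).mpr (h g fun m hm => (hmem m).mp (AddSubgroup.subset_closure hm))

section Representations

lemma exists_mem_Ico_mul_add_mul_eq {a b : ℤ} (hab : IsCoprime a b) (hb : 0 < b)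
    (n q : ℤ) : ∃ x ∈ Set.Ico q (q + b), ∃ y, a * x + b * y = n := by
  obtain ⟨u, v, huv⟩ := hab
  refine ⟨toIcoMod hb q (n * u), toIcoMod_mem_Ico hb q _, n * v + a * toIcoDiv hb q (n * u), ?_⟩
  rw [toIcoMod, smul_eq_mul]
  linear_combination n * huv

/-- The proportional solution of `a * x + b * y = n` has `x = y = n / (a + b)`. -/
lemma exists_balanced_representation {a b n : ℕ} (hab : a.Coprime b) (hb : 0 < b)
    (hn : (a + b) ^ 2 ≤ n) : ∃ x y : ℕ, a * x + b * y = n ∧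
      |((a + b) * x - n : ℤ)| ≤ (a + b) ^ 2 ∧ |((a + b) * y - n : ℤ)| ≤ (a + b) ^ 2 := by
  have hb' : (0 : ℤ) < b := by exact_mod_cast hb
  have hs : (0 : ℤ) < a + b := by positivity
  obtain ⟨x, ⟨hqx, hxq⟩, y, hxy⟩ :=
    exists_mem_Ico_mul_add_mul_eq hab.isCoprime hb' n (n / (a + b))
  have hx_lower : -(a + b : ℤ) < (a + b) * x - n := by
    have := Int.lt_mul_ediv_self_add (x := n) hs
    nlinarith
  have hx_upper : (a + b) * x - n < (a + b : ℤ) * b := by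
    have := Int.mul_ediv_self_le (x := n) hs.ne'
    nlinarith
  have hy_eq : b * ((a + b) * y - n) = -(a * ((a + b) * x - n)) := by
    linear_combination (a + b : ℤ) * hxy
  have hy_lower : -((a + b : ℤ) * a) ≤ (a + b) * y - n := by
    refine le_of_mul_le_mul_left ?_ hb'
    nlinarith
  have hy_upper : (a + b) * y - n ≤ (a + b : ℤ) * a := by
    refine le_of_mul_le_mul_left ?_ hb'
    have : (1 : ℤ) ≤ b := hb'
    nlinarith [mul_nonneg (Nat.cast_nonneg (α := ℤ) a) hs.le]
  have hy_nonneg : 0 ≤ y := by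
    have hn' : ((a : ℤ) + b) ^ 2 ≤ n := by exact_mod_cast hn
    nlinarith [hn']
  have hx_nonneg : 0 ≤ x := le_trans (by positivity) hqx
  lift x to ℕ using hx_nonneg
  lift y to ℕ using hy_nonneg
  refine ⟨x, y, by exact_mod_cast hxy, abs_le.mpr ⟨?_, ?_⟩, abs_le.mpr ⟨?_, ?_⟩⟩ <;> nlinarith

end Representations

lemma dvd_fwdDiff_iter {M R : Type*} [AddCommMonoid M] [CommRing R] {f : M → R} {h y : M} {g : R}
    {k : ℕ} (hk : k ≠ 0) (hg : ∀ i ≤ k, g ∣ f (y + i • h) - f y) : g ∣ (fwdDiff h)^[k] f y := by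
  have hconst : (fwdDiff h)^[k] (fun _ : M => f y) y = 0 := by
    obtain ⟨j, rfl⟩ := Nat.exists_eq_succ_of_ne_zero hk
    rw [Function.iterate_succ_apply, fwdDiff_const, fwdDiff_iter_eq_sum_shift]
    simp
  have hf : (fwdDiff h)^[k] f y = (fwdDiff h)^[k] (fun r => f r - f y) y := by
    conv_lhs => rw [show f = (fun r => f r - f y) + fun _ => f y by ext; simp]
    rw [fwdDiff_iter_add, Pi.add_apply, hconst, add_zero]
  rw [hf, fwdDiff_iter_eq_sum_shift]
  refine Finset.dvd_sum fun i hi => ?_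
  rw [zsmul_eq_mul]
  exact (hg i (Finset.mem_range_succ_iff.mp hi)).mul_left _

lemma mem_closure_of_forall_dvd_sub {f : ℕ → ℤ} {Q : ℕ → Prop} {M : Set ℤ} {n : ℤ} {W k : ℕ}
    (h0 : Q 0) (hk : k ≤ W) (hQk : ¬ Q k)
    (hM : ∀ i ≤ W, ∀ j ≤ W, Q i → ¬ Q j → f j - f i ∈ M)
    (hn : ∀ g : ℤ, (∀ i ≤ W, g ∣ f i - f 0) → g ∣ n) : n ∈ AddSubgroup.closure M := by
  refine mem_closure_of_forall_dvd fun g hg => hn g fun i hi => ?_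
  by_cases hQi : Q i
  · simpa using dvd_sub (hg _ (hM 0 W.zero_le k hk h0 hQk)) (hg _ (hM i hi k hk hQi hQk))
  · exact hg _ (hM 0 W.zero_le i hi h0 hQi)

lemma exists_switch {Q : ℕ → Prop} {x y : ℕ} (hxy : x ≤ y) (hx : ¬ Q x) (hy : Q y) :
    ∃ k, x ≤ k ∧ k < y ∧ ¬ Q k ∧ Q (k + 1) := by
  induction y, hxy using Nat.le_induction with
  | base => exact absurd hy hx
  | succ y hxy ih =>
    by_cases h : Q y
    · obtain ⟨k, hxk, hky, hk⟩ := ih h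
      exact ⟨k, hxk, by omega, hk⟩
    · exact ⟨y, hxy, by omega, h, hy⟩

/-- Growth faster than linear but with increments that are negligible compared to the values, as
for polynomials of degree at least two with positive leading coefficient. -/
structure HasModerateGrowth (P : ℕ → ℕ) : Prop where
  add_self_lt : ∀ K, P K + K < P (K + 1)
  eventually_mul_le : ∀ A C W, ∀ᶠ L in atTop, ∀ K ≤ C * L, A * P (K + W) ≤ P L + A * P K

/-- `n` is a modulus for `P` when every common divisor of `W` consecutive increments of `P`
divides `n`, and `P` maps multiples of `n` to multiples of `n`. -/
structure IsModulus (P : ℕ → ℕ) (W n : ℕ) : Prop where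
  pos : 0 < n
  dvd_of_forall_dvd_sub : ∀ (K : ℕ) (g : ℤ), (∀ i ≤ W, g ∣ (P (K + i) : ℤ) - P K) → g ∣ n
  dvd_apply_mul : ∀ j, n ∣ P (n * j)

/-- `u + v = P Z` has no solution with `N ≤ Z` in which `α u`, `β v` and `γ Z` are equal. -/
def Avoids (α β γ : ℕ → Fin 2) (P : ℕ → ℕ) (N : ℕ) : Prop :=
  ∀ Z ≥ N, ∀ u v, u + v = P Z → α u = γ Z → β v ≠ γ Z

/-- `a * X + b * Y = P Z` has no solution with `N ≤ Z` in which `γ X`, `γ Y` and `γ Z` are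
equal. -/
def AvoidsLinear (a b : ℕ) (γ : ℕ → Fin 2) (P : ℕ → ℕ) (N : ℕ) : Prop :=
  ∀ Z ≥ N, ∀ X Y, a * X + b * Y = P Z → γ X = γ Z → γ Y ≠ γ Z

/-- For every ratio `C` and all large `x`, the colouring `γ` does not change twice between `x` and
`C * x`. -/
def HasSparseChanges (γ : ℕ → Fin 2) : Prop :=
  ∀ C, ∀ᶠ x in atTop, ∀ y z, x < y → y < z → z ≤ C * x → γ x = γ y ∨ γ y = γ z

/-- The differences `P w - P z` with `z, w ≥ L` such that `z` has colour `r` and `w` has not. -/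
def colourShifts (γ : ℕ → Fin 2) (P : ℕ → ℕ) (r : Fin 2) (L : ℕ) : Set ℤ :=
  {m | ∃ z ≥ L, ∃ w ≥ L, γ z = r ∧ γ w ≠ r ∧ (P w : ℤ) - P z = m}

section Colourings

variable {α β γ : ℕ → Fin 2} {P : ℕ → ℕ} {a b n N W : ℕ}

lemma HasModerateGrowth.strictMono (hP : HasModerateGrowth P) : StrictMono P :=
  strictMono_nat_of_lt_succ fun K => (Nat.le_add_right _ _).trans_lt (hP.add_self_lt K)

lemma IsModulus.one_le (hn : IsModulus P W n) : 1 ≤ W := by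
  by_contra hW
  have hzero : (0 : ℤ) ∣ n := hn.dvd_of_forall_dvd_sub 0 0 fun i hi => by
    obtain rfl : i = 0 := by omega
    simp
  have hpos := hn.pos
  simp_all

section Periodicity

-- If `u` has colour `r` then `v = P z - u` has not, and neither has `w`; hence `u' = P w - v` has.
lemma Avoids.eq_of_add_mem_colourShifts (h : Avoids α β γ P N) (hP : Monotone P) {r : Fin 2}
    {L u u' : ℕ} (hL : N ≤ L) (hu : u ≤ P L) (hur : α u = r)
    (hu' : (u' - u : ℤ) ∈ colourShifts γ P r L) : α u' = r := by
  obtain ⟨z, hz, w, hw, hzr, hwr, hm⟩ := hu'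
  have hPz : P L ≤ P z := hP hz
  have hv := h z (hL.trans hz) u (P z - u) (by omega)
  have hu'v := h w (hL.trans hw) u' (P z - u) (by omega)
  omega

lemma Avoids.eq_of_dvd_sub (h : Avoids α β γ P N) (hP : StrictMono P) (hn : IsModulus P W n)
    {r : Fin 2} {K L : ℕ} (hL : N ≤ L) (hLK : L ≤ K) (hLr : γ L ≠ r) (hLr' : γ (L + 1) = r)
    (hKr : γ K = r) (hKr' : γ (K + 1) ≠ r) (hPL : 2 * P (L + 1) ≤ P L + 2 * P L)
    (hPK : 2 * P (K + W) ≤ P L + 2 * P K) {x y : ℕ} (hx : x ≤ P L) (hy : y ≤ P L)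
    (hxy : (n : ℤ) ∣ y - x) (hxr : α x = r) : α y = r := by
  let M : Set ℤ := {m ∈ colourShifts γ P r L | |m| + |m| ≤ P L}
  have hW := hn.one_le
  have hPL' : P L < P (L + 1) := hP L.lt_succ_self
  have hPK' : P K < P (K + 1) := hP K.lt_succ_self
  have hmem : ∀ i ≤ W, ∀ j ≤ W, γ (K + i) = r → γ (K + j) ≠ r →
      (P (K + j) : ℤ) - P (K + i) ∈ M := by
    intro i hi j hj hir hjr
    refine ⟨⟨K + i, by omega, K + j, by omega, hir, hjr, rfl⟩, ?_⟩
    have hPKW : ∀ i ≤ W, P K ≤ P (K + i) ∧ P (K + i) ≤ P (K + W) := fun i hi =>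
      ⟨hP.monotone (by omega), hP.monotone (by omega)⟩
    grind
  have hup : (P (K + 1) : ℤ) - P K ∈ M := hmem 0 W.zero_le 1 hW hKr hKr'
  have hdown : (P L : ℤ) - P (L + 1) ∈ M :=
    ⟨⟨L + 1, L.le_succ, L, le_rfl, hLr', hLr, rfl⟩, by grind⟩
  have hnM : (n : ℤ) ∈ AddSubgroup.closure M :=
    mem_closure_of_forall_dvd_sub (Q := fun i => γ (K + i) = r) hKr hW hKr' hmem
      (hn.dvd_of_forall_dvd_sub K)
  have hxyM : (y : ℤ) - x ∈ AddSubgroup.closure M := by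
    obtain ⟨k, hk⟩ := hxy
    simpa [hk, mul_comm] using AddSubgroup.zsmul_mem _ hnM k
  let S : Set ℤ := {m | ∃ u : ℕ, u = m ∧ u ≤ P L ∧ α u = r}
  obtain ⟨y', hy', -, hyr⟩ : (y : ℤ) ∈ S := by
    refine mem_of_sub_mem_closure_of_add_mem (M := M) (x := x) (R := P L) (fun m hm => hm.2) ?_ ?_
      ⟨x, rfl, hx, hxr⟩ ⟨by omega, by omega⟩
      (closure_toAddSubmonoid_le_of_pos_of_neg hup (by omega) hdown (by omega) hxyM)
    · rintro _ ⟨u, rfl, hu, -⟩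
      exact ⟨by omega, by omega⟩
    · rintro _ ⟨u, rfl, hu, hur⟩ m ⟨hm, -⟩ ⟨hum, humR⟩
      lift (u + m : ℤ) to ℕ using hum with u' hu'
      exact ⟨u', rfl, by omega,
        h.eq_of_add_mem_colourShifts hP.monotone hL hu hur (by rwa [hu', add_sub_cancel_left])⟩
  rwa [← Int.natCast_inj.mp hy']

lemma Avoids.exists_ne (h : Avoids α β γ P N) (hab : a.Coprime b) (hb : 0 < b)
    (hα : ∀ Z, α (a * Z) = γ Z) (hβ : ∀ Z, β (b * Z) = γ Z) (hP : StrictMono P)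
    (hn : IsModulus P W n) : ∃ x y, n ∣ x ∧ n ∣ y ∧ α x ≠ α y := by
  by_contra! hconst
  have hγ : ∀ X Y, γ (n * X) = γ (n * Y) := fun X Y => by
    rw [← hα, ← hα]
    exact hconst _ _ (dvd_mul_of_dvd_right (dvd_mul_right _ _) _)
      (dvd_mul_of_dvd_right (dvd_mul_right _ _) _)
  obtain ⟨q, hq⟩ := hn.dvd_apply_mul (N + (a + b) ^ 2)
  have hqle : N + (a + b) ^ 2 ≤ q :=
    Nat.le_of_mul_le_mul_left (hP.le_apply.trans_eq hq) hn.pos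
  obtain ⟨X, Y, hXY, -⟩ := exists_balanced_representation hab hb (n := q) (by omega)
  refine h (n * (N + (a + b) ^ 2)) ?_ (a * (n * X)) (b * (n * Y)) ?_ ?_ ?_
  · exact (Nat.le_add_right _ _).trans (Nat.le_mul_of_pos_left _ hn.pos)
  · rw [hq, ← hXY]
    ring
  · rw [hα, hγ]
  · rw [hβ, hγ]

theorem Avoids.hasSparseChanges (h : Avoids α β γ P N) (hP : HasModerateGrowth P)
    (hn : IsModulus P W n) (hα : ∃ x y, n ∣ x ∧ n ∣ y ∧ α x ≠ α y) : HasSparseChanges γ := by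
  intro C
  obtain ⟨x, y, hnx, hny, hxy⟩ := hα
  obtain ⟨N₁, hN₁⟩ := eventually_atTop.mp (hP.eventually_mul_le 2 (C + 1) W)
  filter_upwards [eventually_ge_atTop (N + N₁ + x + y)] with x₁ hx₁ x₂ x₃ hx₁₂ hx₂₃ hx₁₃
  by_contra! hne
  obtain ⟨L, hx₁L, hLx₂, hLr, hLr'⟩ := exists_switch (Q := fun x => γ x = γ x₂) hx₁₂.le hne.1 rfl
  obtain ⟨K, hx₂K, hKx₃, hKr, hKr'⟩ :=
    exists_switch (Q := fun x => γ x ≠ γ x₂) hx₂₃.le (by simp) hne.2.symm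
  have hPL : L ≤ P L := hP.strictMono.le_apply
  have hPLW : P (L + 1) ≤ P (L + W) := hP.strictMono.monotone (by have := hn.one_le; omega)
  have hgrowL := hN₁ L (by omega) L (Nat.le_mul_of_pos_left _ C.succ_pos)
  have hgrowK := hN₁ L (by omega) K (by nlinarith)
  have hperiodic : ∀ x y, n ∣ x → n ∣ y → x ≤ P L → y ≤ P L → α x = γ x₂ → α y = γ x₂ :=
    fun x y hnx hny hx hy => h.eq_of_dvd_sub hP.strictMono hn (by omega) (by omega) hLr hLr'
      (not_not.mp hKr) hKr' (by omega) hgrowK hx hy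
      (dvd_sub (Int.natCast_dvd_natCast.mpr hny) (Int.natCast_dvd_natCast.mpr hnx))
  have hxy' := hperiodic x y hnx hny (by omega) (by omega)
  have hyx' := hperiodic y x hny hnx (by omega) (by omega)
  omega

end Periodicity

section Alternation

lemma HasSparseChanges.eventually_eq_of_lt_add (hγ : HasSparseChanges γ) (a : ℕ) :
    ∀ᶠ K in atTop, γ (K + 1) ≠ γ K → ∀ Y ≤ K, K < Y + a → γ Y = γ K := by
  obtain ⟨T, hT⟩ := eventually_atTop.mp (hγ 2)
  filter_upwards [eventually_ge_atTop (T + 2 * a + 1)] with K hK hne Y hYK hKY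
  rcases hYK.eq_or_lt with rfl | hYK
  · rfl
  · exact (hT Y (by omega) K (K + 1) hYK K.lt_succ_self (by omega)).resolve_right hne.symm

lemma AvoidsLinear.exists_ne (h : AvoidsLinear a b γ P N) (hab : a.Coprime b) (hb : 0 < b) {K : ℕ}
    (hK : N ≤ K) (hPK : (a + b) ^ 2 ≤ P K) :
    ∃ X : ℕ, γ X ≠ γ K ∧ |((a + b) * X - P K : ℤ)| ≤ (a + b) ^ 2 := by
  obtain ⟨X, Y, hXY, hX, hY⟩ := exists_balanced_representation hab hb hPK
  by_cases hXK : γ X = γ K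
  · exact ⟨Y, h K hK X Y hXY hXK, hY⟩
  · exact ⟨X, hXK, hX⟩

lemma AvoidsLinear.exists_ne_of_eq_of_lt_add (h : AvoidsLinear a b γ P N) (hab : a.Coprime b)
    (ha : 0 < a) {K : ℕ} (hK : N ≤ K) (haK : a ≤ K) (hPK : b * K ≤ P K)
    (hγ : ∀ Y ≤ K, K < Y + a → γ Y = γ K) :
    ∃ X : ℕ, γ X ≠ γ K ∧ (P K : ℤ) - b * K ≤ a * X ∧ a * X ≤ P K := by
  obtain ⟨Y, ⟨hYlower, hYupper⟩, X, hXY⟩ := exists_mem_Ico_mul_add_mul_eq hab.symm.isCoprime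
    (by exact_mod_cast ha : (0 : ℤ) < a) (P K) (K + 1 - a)
  have hbY : (b : ℤ) * Y ≤ b * K := by gcongr; omega
  have hX : 0 ≤ X := by
    refine nonneg_of_mul_nonneg_right (a := (a : ℤ)) ?_ (by exact_mod_cast ha)
    zify at hPK
    linarith
  lift Y to ℕ using by omega
  lift X to ℕ using hX
  refine ⟨X, fun hXK => ?_, by linarith, by nlinarith⟩
  exact h K hK X Y (by zify; linarith) hXK (hγ Y (by omega) (by omega))

lemma AvoidsLinear.frequently_succ_ne (h : AvoidsLinear a b γ P N) (hab : a.Coprime b)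
    (hb : 0 < b) (hP : StrictMono P) : ∃ᶠ K in atTop, γ (K + 1) ≠ γ K := by
  intro hev
  obtain ⟨T, hT⟩ := eventually_atTop.mp hev
  have hconst : ∀ Z ≥ T, γ Z = γ T := fun Z hZ => by
    induction Z, hZ using Nat.le_induction with
    | base => rfl
    | succ Z hZ ih => rw [← ih, not_not.mp (hT Z hZ)]
  set Z := N + (a + b) * T + (a + b) ^ 2 with hZ
  have hPZ : Z ≤ P Z := hP.le_apply
  obtain ⟨X, hXZ, hX⟩ := h.exists_ne hab hb (K := Z) (by omega) (by omega)
  have hTX : (a + b) * T ≤ (a + b) * X := by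
    have := (abs_le.mp hX).1
    zify at hZ hPZ ⊢
    linarith
  have hTZ : T ≤ Z := by nlinarith
  exact hXZ ((hconst X (Nat.le_of_mul_le_mul_left hTX (by omega))).trans (hconst Z hTZ).symm)

lemma lt_and_lt_and_le_of_abs_sub_le {a b s p D K X₁ X₂ X₃ : ℤ} (ha : 0 < a) (hb : 0 < b)
    (hs : s = a + b) (hK : 2 * s ^ 2 ≤ K) (hKD : K < D) (hDp : (2 * a + s * b + 1) * D ≤ p)
    (hX₁ : |s * X₁ - p| ≤ s ^ 2) (hX₂ : |s * X₂ - (p + D)| ≤ s ^ 2) (hX₃ : p - b * K ≤ a * X₃)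
    (hX₃' : a * X₃ ≤ p) : X₁ < X₂ ∧ X₂ < X₃ ∧ X₃ ≤ 2 * s * X₁ := by
  rw [abs_le] at hX₁ hX₂
  have hs0 : 0 < s := by omega
  have hD : 0 < D := by nlinarith
  have hsbD : 0 ≤ s * b * D := by positivity
  have haD : 0 < a * D := by positivity
  have hDp' : D ≤ p := by linarith
  refine ⟨lt_of_mul_lt_mul_left (by linarith : s * X₁ < s * X₂) hs0.le, ?_, ?_⟩
  · have hsD : a * s ^ 2 ≤ a * D := by gcongr; linarith
    have hbK : s * b * K ≤ s * b * D := by gcongr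
    have hsp : s * p = a * p + b * p := by rw [hs, add_mul]
    have hbp : p ≤ b * p := le_mul_of_one_le_left (hD.le.trans hDp') hb
    refine lt_of_mul_lt_mul_left (a := a * s) ?_ (by positivity)
    calc a * s * X₂ = a * (s * X₂) := mul_assoc _ _ _
      _ ≤ a * (p + D + s ^ 2) := by gcongr; linarith
      _ < s * (p - b * K) := by linarith
      _ ≤ s * (a * X₃) := by gcongr
      _ = a * s * X₃ := by ring
  · have hX₃p : X₃ ≤ p := by nlinarith
    linarith

/-- With `s = a + b`, a colour change at `K` yields `X₁ < X₂ < X₃` of alternating colours, where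
`s * X₁` is close to `P K`, `s * X₂` is close to `P (K + 1)`, and `a * X₃` is close to `P K`. -/
theorem AvoidsLinear.not_hasSparseChanges (h : AvoidsLinear a b γ P N) (hab : a.Coprime b)
    (ha : 0 < a) (hb : 0 < b) (hP : HasModerateGrowth P) : ¬ HasSparseChanges γ := by
  intro hγ
  obtain ⟨s, hs⟩ : ∃ s, s = a + b := ⟨_, rfl⟩
  obtain ⟨T, hT⟩ := eventually_atTop.mp (hγ (2 * s))
  obtain ⟨K, hne, hwindow, hgrow, hK⟩ := (h.frequently_succ_ne hab hb hP.strictMono).and_eventually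
    ((hγ.eventually_eq_of_lt_add a).and ((hP.eventually_mul_le (2 * a + s * b + 1) 1 1).and
      (eventually_ge_atTop (N + a + s * T + 2 * s ^ 2)))) |>.exists
  have hPK : K ≤ P K := hP.strictMono.le_apply
  obtain ⟨D, hKD, hD⟩ : ∃ D, K < D ∧ P (K + 1) = P K + D := by
    have := hP.add_self_lt K
    exact ⟨P (K + 1) - P K, by omega, by omega⟩
  have hDP : (2 * a + s * b + 1) * D ≤ P K := by
    have := hgrow K (one_mul K).ge
    rw [hD, mul_add] at this
    omega
  have hbK : b * K ≤ P K := le_trans (by gcongr; nlinarith) hDP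
  obtain ⟨X₁, hX₁, hsX₁⟩ := h.exists_ne hab hb (K := K) (by omega) (by rw [← hs]; omega)
  obtain ⟨X₂, hX₂, hsX₂⟩ := h.exists_ne hab hb (K := K + 1) (by omega) (by rw [← hs]; omega)
  obtain ⟨X₃, hX₃, haX₃, haX₃'⟩ :=
    h.exists_ne_of_eq_of_lt_add hab ha (by omega) (by omega) hbK (hwindow hne)
  rw [← Nat.cast_add, ← hs] at hsX₁ hsX₂
  rw [hD, Nat.cast_add] at hsX₂
  obtain ⟨h₁₂, h₂₃, h₁₃⟩ := lt_and_lt_and_le_of_abs_sub_le (by exact_mod_cast ha)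
    (by exact_mod_cast hb) (by exact_mod_cast hs) (by exact_mod_cast (by omega : 2 * s ^ 2 ≤ K))
    (by exact_mod_cast hKD) (by exact_mod_cast hDP) hsX₁ hsX₂ haX₃
    (by exact_mod_cast haX₃')
  have hT₁ : T ≤ X₁ := by
    have : s * T ≤ s * X₁ := by
      have := (abs_le.mp hsX₁).1
      zify at hK hPK ⊢
      nlinarith
    exact Nat.le_of_mul_le_mul_left this (by omega)
  have := hT X₁ hT₁ X₂ X₃ (by exact_mod_cast h₁₂) (by exact_mod_cast h₂₃) (by exact_mod_cast h₁₃)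
  omega

end Alternation

theorem frequently_exists_monochromatic (hab : a.Coprime b) (ha : 0 < a) (hb : 0 < b)
    (hP : HasModerateGrowth P) (hn : IsModulus P W n) (hα : ∀ Z, α (a * Z) = γ Z)
    (hβ : ∀ Z, β (b * Z) = γ Z) :
    ∃ᶠ Z in atTop, ∃ u v, u + v = P Z ∧ α u = γ Z ∧ β v = γ Z := by
  intro hev
  obtain ⟨N, hN⟩ := eventually_atTop.mp hev
  have h : Avoids α β γ P N := fun Z hZ u v huv hu hv => hN Z hZ ⟨u, v, huv, hu, hv⟩
  have hlin : AvoidsLinear a b γ P N := fun Z hZ X Y hXY hX hY =>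
    h Z hZ _ _ hXY ((hα X).trans hX) ((hβ Y).trans hY)
  exact hlin.not_hasSparseChanges hab ha hb hP
    (h.hasSparseChanges hP hn (h.exists_ne hab hb hα hβ hP.strictMono hn))

end Colourings

section PowerSequence

variable {P : ℕ → ℕ} {d e k q s : ℕ}

lemma add_self_lt_of_add_eq_mul_pow (hP : ∀ Z, P Z + e = d * (q + Z) ^ k) (hd : 0 < d)
    (hq : 0 < q) (hk : 2 ≤ k) (K : ℕ) : P K + K < P (K + 1) := by
  have hpow : (q + K) ^ k + K < (q + (K + 1)) ^ k :=
    calc (q + K) ^ k + K < (q + K) ^ (k - 1) * (q + K) + (q + K) ^ (k - 1) := by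
          rw [pow_sub_one_mul (by omega)]
          gcongr
          exact (Nat.lt_add_of_pos_left hq).trans_le (Nat.le_self_pow (by omega) _)
      _ = (q + K) ^ (k - 1) * (q + (K + 1)) := by ring
      _ ≤ (q + (K + 1)) ^ (k - 1) * (q + (K + 1)) := by gcongr; omega
      _ = (q + (K + 1)) ^ k := pow_sub_one_mul (by omega) _
  refine lt_of_add_lt_add_right (a := e) ?_
  calc P K + K + e = d * (q + K) ^ k + K := by rw [← hP]; ring
    _ ≤ d * (q + K) ^ k + d * K := Nat.add_le_add_left (Nat.le_mul_of_pos_left K hd) _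
    _ < d * (q + (K + 1)) ^ k := by rw [← mul_add]; gcongr
    _ = P (K + 1) + e := (hP _).symm

lemma pow_le_of_add_eq_mul_pow (hP : ∀ Z, P Z + e = d * (q + Z) ^ k) (hd : 0 < d) (hk : k ≠ 0)
    (L : ℕ) : L ^ k ≤ P L := by
  refine le_of_add_le_add_right (a := e) ?_
  calc L ^ k + e ≤ d * L ^ k + d * q ^ k :=
        add_le_add (Nat.le_mul_of_pos_left _ hd)
          (by simpa using (Nat.le_add_left _ _).trans_eq (hP 0))
    _ = d * (q ^ k + L ^ k) := by ring
    _ ≤ d * (q + L) ^ k := by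
        gcongr
        exact pow_add_pow_le (Nat.zero_le _) (Nat.zero_le _) hk
    _ = P L + e := (hP L).symm

lemma apply_add_le_of_add_eq_mul_pow (hP : ∀ Z, P Z + e = d * (q + Z) ^ k) (K W : ℕ) :
    P (K + W) ≤ P K + d * (W * k * (q + (K + W)) ^ (k - 1)) := by
  have hpow := (le_abs_self _).trans
    (abs_pow_sub_pow_le (a := (q + (K + W) : ℤ)) (b := q + K) (n := k))
  rw [show (q + (K + W) - (q + K) : ℤ) = W by ring, Nat.abs_cast,
    max_eq_left (abs_le_abs_of_nonneg (by positivity) (by gcongr; omega)),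
    abs_of_nonneg (by positivity : (0 : ℤ) ≤ q + (K + W))] at hpow
  have hPK := hP K
  have hPKW := hP (K + W)
  zify at hPK hPKW ⊢
  linarith [mul_le_mul_of_nonneg_left hpow (Nat.cast_nonneg (α := ℤ) d)]

lemma hasModerateGrowth_of_add_eq_mul_pow (hP : ∀ Z, P Z + e = d * (q + Z) ^ k) (hd : 0 < d)
    (hq : 0 < q) (hk : 2 ≤ k) : HasModerateGrowth P where
  add_self_lt := add_self_lt_of_add_eq_mul_pow hP hd hq hk
  eventually_mul_le A C W := by
    set G := q + (C + W)
    filter_upwards [eventually_ge_atTop (A * (d * (W * k * G ^ (k - 1))) + 1)] with L hL K hK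
    have hG : q + (K + W) ≤ G * L :=
      calc q + (K + W) ≤ q * L + (C * L + W * L) := by
            gcongr <;> exact Nat.le_mul_of_pos_right _ (by omega)
        _ = G * L := by ring
    calc A * P (K + W) ≤ A * (P K + d * (W * k * (q + (K + W)) ^ (k - 1))) := by
          gcongr
          exact apply_add_le_of_add_eq_mul_pow hP K W
      _ ≤ A * (P K + d * (W * k * (G * L) ^ (k - 1))) := by gcongr
      _ = L ^ (k - 1) * (A * (d * (W * k * G ^ (k - 1)))) + A * P K := by rw [mul_pow]; ring
      _ ≤ L ^ (k - 1) * L + A * P K := by gcongr; omega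
      _ = L ^ k + A * P K := by rw [pow_sub_one_mul (by omega)]
      _ ≤ P L + A * P K := by gcongr; exact pow_le_of_add_eq_mul_pow hP hd (by omega) L

lemma dvd_factorial_mul_of_forall_dvd_sub (hP : ∀ Z, P Z + e = d * (q + Z) ^ k) (hk : k ≠ 0)
    {K : ℕ} {g : ℤ} (hg : ∀ i ≤ k, g ∣ (P (K + i) : ℤ) - P K) :
    g ∣ ((k.factorial * d : ℕ) : ℤ) := by
  have hP' : ∀ Z : ℕ, (d * (q + Z) ^ k : ℤ) = P Z + e := fun Z => by exact_mod_cast (hP Z).symm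
  have hdiff : g ∣ (fwdDiff 1)^[k] ((d : ℤ) • fun r : ℤ => r ^ k) (q + K) := by
    refine dvd_fwdDiff_iter hk fun i hi => ?_
    have hPi := hP' (K + i)
    push_cast at hPi
    simpa [add_assoc, hPi, hP'] using hg i hi
  rw [fwdDiff_iter_const_smul, fwdDiff_iter_eq_factorial] at hdiff
  simpa [mul_comm] using hdiff

lemma isModulus_of_add_eq_mul_pow (hP : ∀ Z, P Z + e = d * (q + Z) ^ k) (hd : 0 < d) (hk : k ≠ 0)
    (hq : k.factorial * d ∣ q) (he : k.factorial * d ∣ e) :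
    IsModulus P k (k.factorial * d) where
  pos := by positivity
  dvd_of_forall_dvd_sub K g := dvd_factorial_mul_of_forall_dvd_sub hP hk
  dvd_apply_mul j := by
    rw [← Nat.dvd_add_left he, hP]
    exact dvd_mul_of_dvd_right (dvd_pow (dvd_add hq (dvd_mul_right _ _)) hk) _

end PowerSequence

lemma exists_add_eq_mul_pow {d e k q : ℕ} (he : e ≤ d * q ^ k) :
    ∃ P : ℕ → ℕ, ∀ Z, P Z + e = d * (q + Z) ^ k :=
  ⟨fun Z => d * (q + Z) ^ k - e, fun Z => Nat.sub_add_cancel (he.trans (by gcongr; omega))⟩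

/-- The triples of positive integers with `a * x + b * y = c * z ^ k` whose entries have the same
colour under `φ`. -/
def monochromaticSolutions (φ : ℕ → Fin 2) (a b c k : ℕ) : Set (ℕ × ℕ × ℕ) :=
  {w | 0 < w.1 ∧ 0 < w.2.1 ∧ 0 < w.2.2 ∧ φ w.1 = φ w.2.1 ∧ φ w.1 = φ w.2.2 ∧
    a * w.1 + b * w.2.1 = c * w.2.2 ^ k}

section Solutions

variable {a b c k : ℕ}

lemma mem_monochromaticSolutions_of_add_eq {P : ℕ → ℕ} {φ : ℕ → Fin 2} {q u v Z : ℕ} (ha : 0 < a)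
    (hb : 0 < b) (hq : 0 < q) (hk : k ≠ 0)
    (hP : P Z + q * (a + b) = c * (a * b) ^ (k - 1) * (q + Z) ^ k) (huv : u + v = P Z)
    (hu : φ (a * b * q + b * u) = φ (a * b * (q + Z)))
    (hv : φ (a * b * q + a * v) = φ (a * b * (q + Z))) :
    (a * b * q + b * u, a * b * q + a * v, a * b * (q + Z)) ∈
      monochromaticSolutions φ a b c k := by
  refine ⟨by positivity, by positivity, by positivity, hu.trans hv.symm, hu, ?_⟩
  calc a * (a * b * q + b * u) + b * (a * b * q + a * v)
      = a * b * (u + v + q * (a + b)) := by ring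
    _ = a * b * (a * b) ^ (k - 1) * (c * (q + Z) ^ k) := by rw [huv, hP]; ring
    _ = c * (a * b * (q + Z)) ^ k := by rw [mul_pow_sub_one hk, mul_pow (a * b)]; ring

theorem infinite_monochromaticSolutions_of_coprime (ha : 0 < a) (hb : 0 < b) (hc : 0 < c)
    (hab : a.Coprime b) (hk : 2 ≤ k) (φ : ℕ → Fin 2) :
    (monochromaticSolutions φ a b c k).Infinite := by
  set d := c * (a * b) ^ (k - 1)
  have hd : 0 < d := by positivity
  set q := k.factorial * d * (a + b)
  have hq : 0 < q := by positivity
  have hqn : k.factorial * d ∣ q := dvd_mul_right _ _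
  have he : q * (a + b) ≤ d * q ^ k :=
    calc q * (a + b) ≤ q * q := Nat.mul_le_mul_left q (Nat.le_mul_of_pos_left _ (by positivity))
      _ = q ^ 2 := (sq q).symm
      _ ≤ q ^ k := Nat.pow_le_pow_right hq hk
      _ ≤ d * q ^ k := Nat.le_mul_of_pos_left _ hd
  obtain ⟨P, hP⟩ := exists_add_eq_mul_pow he
  have hfreq := frequently_exists_monochromatic (α := fun u => φ (a * b * q + b * u))
    (β := fun v => φ (a * b * q + a * v)) (γ := fun Z => φ (a * b * (q + Z))) hab ha hb
    (hasModerateGrowth_of_add_eq_mul_pow hP hd hq hk)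
    (isModulus_of_add_eq_mul_pow hP hd (by omega) hqn (hqn.mul_right _))
    (fun Z => by ring_nf) (fun Z => by ring_nf)
  refine Set.Infinite.of_image (fun w => w.2.2) (Set.infinite_of_forall_exists_gt fun l => ?_)
  obtain ⟨Z, hlZ, u, v, huv, hu, hv⟩ := hfreq.forall_exists_of_atTop l
  refine ⟨_, ⟨_, mem_monochromaticSolutions_of_add_eq ha hb hq (by omega) (hP Z) huv hu hv, rfl⟩,
    ?_⟩
  calc l < q + Z := by omega
    _ ≤ a * b * (q + Z) := Nat.le_mul_of_pos_left _ (Nat.mul_pos ha hb)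

lemma infinite_monochromaticSolutions_mul_left {g : ℕ} (hg : 0 < g) {φ : ℕ → Fin 2} (hk : 2 ≤ k)
    (h : (monochromaticSolutions (fun x => φ (g * x)) a b (c * g ^ (k - 2)) k).Infinite) :
    (monochromaticSolutions φ (g * a) (g * b) c k).Infinite := by
  have hinj : Function.Injective (g * · : ℕ → ℕ) := fun _ _ => Nat.eq_of_mul_eq_mul_left hg
  refine (h.image (hinj.prodMap (hinj.prodMap hinj)).injOn).mono ?_
  rintro _ ⟨⟨x, y, z⟩, ⟨hx, hy, hz, hxy, hxz, heq⟩, rfl⟩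
  refine ⟨Nat.mul_pos hg hx, Nat.mul_pos hg hy, Nat.mul_pos hg hz, hxy, hxz, ?_⟩
  calc g * a * (g * x) + g * b * (g * y) = g ^ 2 * (a * x + b * y) := by ring
    _ = c * (g ^ (k - 2) * g ^ 2) * z ^ k := by rw [heq]; ring
    _ = c * (g * z) ^ k := by rw [← pow_add, Nat.sub_add_cancel hk, mul_pow, mul_assoc]

theorem stmt_3_general (ha : 0 < a) (hb : 0 < b) (hc : 0 < c) (hk : 2 ≤ k) (φ : ℕ → Fin 2) :
    (monochromaticSolutions φ a b c k).Infinite := by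
  obtain ⟨g, a', b', hg, hab, rfl, rfl⟩ := Nat.exists_coprime' (Nat.gcd_pos_of_pos_left b ha)
  rw [mul_comm a', mul_comm b']
  exact infinite_monochromaticSolutions_mul_left hg hk
    (infinite_monochromaticSolutions_of_coprime (Nat.pos_of_mul_pos_right ha)
      (Nat.pos_of_mul_pos_right hb) (by positivity) hab hk _)

end Solutions

/-- **Corollary for `a·x + b·y = c·z^p`.** Let `a, b, c` be positive integers with
`gcd(a,b) = 1`, and let `p` be a prime with `p ∤ a`. Write `ν_p(b) = p·n − ε` with `n ≥ 0` and
`0 ≤ ε ≤ p − 1` (encoded as `ν_p(b) + ε = p·n`), and let `B = b / p^{ν_p(b)}` (encoded as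
`b = p^{ν_p(b)} · B`). Suppose `gcd(a,c) = 1`, `gcd(B,c) = 1`, and there is an integer `t` with
`t ≡ 0 (mod p^n)`, `c·t^{p−1} ≡ a (mod B)` and `c·t^{p−1} ≡ b (mod a)`. Then the equation
`a·x + b·y = c·z^p` is 2-Ramsey. -/
theorem stmt_3 (a b c : ℕ) (ha : 0 < a) (hb : 0 < b) (hc : 0 < c)
    (hab : Nat.gcd a b = 1) (p : ℕ) (hp : p.Prime) (hpa : ¬ p ∣ a)
    (n ε B : ℕ) (hε : ε ≤ p - 1) (hν : padicValNat p b + ε = p * n)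
    (hB : b = p ^ padicValNat p b * B)
    (hac : Nat.gcd a c = 1) (hBc : Nat.gcd B c = 1)
    (ht : ∃ t : ℤ, (p : ℤ) ^ n ∣ t ∧ (B : ℤ) ∣ (c : ℤ) * t ^ (p - 1) - a ∧
      (a : ℤ) ∣ (c : ℤ) * t ^ (p - 1) - b) :
    ∀ φ : ℕ → Fin 2,
      {w : ℕ × ℕ × ℕ | 0 < w.1 ∧ 0 < w.2.1 ∧ 0 < w.2.2 ∧
        φ w.1 = φ w.2.1 ∧ φ w.1 = φ w.2.2 ∧
        a * w.1 + b * w.2.1 = c * w.2.2 ^ p}.Infinite := by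
  exact stmt_3_general ha hb hc hp.two_le
end

section
/- Let a, b, c be positive integers such that gcd(c, a / gcd(a,b)) is a power of 2 and gcd(c, b / gcd(a,b)) is a power of 2. Then the equation a·x + b·y = c·z² is 2-Ramsey. -/
/-!
Put `ψ n = φ (a * b * n)`. The triple `(a * b * (b * c * u), a * b * (a * c * y), a * b * z)`
solves `a * x + b * y = c * z ^ 2` as soon as `u + y = z ^ 2`, so it is enough to make the colours
`ψ (b * c * u)`, `ψ (a * c * y)` and `ψ z` agree for arbitrarily large `z`.

Suppose this fails beyond some `N`, and write `α = b * c`. If `z` and `w` have different colours,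
reflecting `u` in `z ^ 2` and then in `w ^ 2` shows that the set of `u` with `ψ (α * u) = ψ z` is
closed under `u ↦ u + w ^ 2 - z ^ 2`. A long run of the other colour after `z` allows the steps
`(z + k) ^ 2 - z ^ 2`, which fill out the upper part of `[1, z ^ 2]` and force a solution; hence
every colour recurs within bounded gaps. A run `t + 1, …, s` of one colour then has bounded length,
and the changes of colour at its two ends give a total step of `2 * (s - t)`. Consequently
`u ↦ ψ (α * u)` is periodic, and the multiples of its period contain a solution.
-/

theorem exists_and_not_succ_of_le {p : ℕ → Prop} {m n : ℕ} (hmn : m ≤ n) (hm : p m) (hn : ¬p n) :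
    ∃ k, m ≤ k ∧ k < n ∧ p k ∧ ¬p (k + 1) := by
  induction n, hmn using Nat.le_induction with
  | base => exact absurd hm hn
  | succ n hmn ih =>
    by_cases hpn : p n
    · exact ⟨n, hmn, n.lt_succ_self, hpn, hn⟩
    · obtain ⟨k, hmk, hkn, hk⟩ := ih hpn
      exact ⟨k, hmk, hkn.trans n.lt_succ_self, hk⟩

theorem add_mul_mem_of_forall_add_mem {S : Set ℕ} {s T : ℕ}
    (hS : ∀ u ∈ S, u + s ≤ T → u + s ∈ S) (n : ℕ) {u : ℕ} (hu : u ∈ S) (hT : u + n * s ≤ T) :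
    u + n * s ∈ S := by
  induction n with
  | zero => simpa using hu
  | succ n ih =>
    rw [Nat.succ_mul, ← Nat.add_assoc] at hT ⊢
    exact hS _ (ih (by omega)) hT

theorem exists_mul_le_and_le_two_mul {d n : ℕ} (hd : 0 < d) (hdn : d ≤ n) :
    ∃ v, 0 < v ∧ d * v ≤ n ∧ n ≤ 2 * (d * v) := by
  have hv : 0 < n / d := Nat.div_pos hdn hd
  have hlt := Nat.lt_mul_div_succ n hd
  exact ⟨n / d, hv, Nat.mul_div_le n d, by nlinarith⟩

theorem exists_eq_mul_two_mul_add_one_add_two_mul {z n : ℕ} (hn : 4 * z ≤ n) :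
    ∃ K r, r ≤ 2 * z ∧ n = K * (2 * z + 1) + 2 * r := by
  -- `z + 1` is the inverse of `2` modulo `2 * z + 1`.
  set r := n * (z + 1) % (2 * z + 1)
  have hr_le : r ≤ 2 * z := Nat.lt_succ_iff.mp (Nat.mod_lt _ (Nat.succ_pos _))
  have hmod : 2 * r ≡ n [MOD 2 * z + 1] :=
    calc 2 * r ≡ 2 * (n * (z + 1)) [MOD 2 * z + 1] := (Nat.mod_modEq _ _).mul_left 2
      _ = n + n * (2 * z + 1) := by ring
      _ ≡ n [MOD 2 * z + 1] := by simp [Nat.ModEq]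
  obtain ⟨K, hK⟩ := (Nat.modEq_iff_dvd' (by omega)).mp hmod
  exact ⟨K, r, hr_le, by rw [mul_comm K]; omega⟩

theorem exists_eq_sum_sq_sub_sq {g z n : ℕ} (hg : 0 < g) (hgz : 5 * g ^ 3 ≤ z)
    (hn : 15 * z ^ 2 ≤ g * n) :
    ∃ i j l, n = i * ((z + 1) ^ 2 - z ^ 2) + j * ((z + 2) ^ 2 - z ^ 2) +
      l * ((z + (g + 1)) ^ 2 - z ^ 2) := by
  have hg_le : g ≤ g ^ 3 := Nat.le_self_pow three_ne_zero g
  have hg_sq_le : g ^ 2 ≤ g ^ 3 := Nat.pow_le_pow_right hg (by omega)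
  have hn_ge : 4 * z ≤ n := by
    refine Nat.le_of_mul_le_mul_left ?_ hg
    nlinarith
  obtain ⟨K, r, hr, rfl⟩ := exists_eq_mul_two_mul_add_one_add_two_mul hn_ge
  have hK : 5 * z ≤ g * K := by
    by_contra! hlt
    nlinarith
  obtain ⟨m, hm⟩ : ∃ m, g * (g + 1) = 2 * m := (Nat.even_mul_succ_self g).two_dvd
  have hm_pos : 0 < m := by nlinarith
  have hr_eq := Nat.div_add_mod r m
  have hj_lt := Nat.mod_lt r hm_pos
  set l := r / m
  set j := r % m
  have hjl : 2 * j + (g + 1) * l ≤ K := by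
    refine Nat.le_of_mul_le_mul_left ?_ hg
    calc g * (2 * j + (g + 1) * l) = 2 * (g * j) + g * (g + 1) * l := by ring
      _ = 2 * (g * j) + 2 * (m * l) := by rw [hm]; ring
      _ ≤ g * (g * (g + 1)) + 2 * r := by nlinarith
      _ ≤ z + 4 * z := by nlinarith
      _ ≤ g * K := by omega
  obtain ⟨i, rfl⟩ := Nat.exists_eq_add_of_le hjl
  have sq_sub (k : ℕ) : (z + k) ^ 2 - z ^ 2 = 2 * k * z + k ^ 2 :=
    Nat.sub_eq_of_eq_add (by ring)
  -- `(z + k) ^ 2 - z ^ 2` exceeds `k` steps of length `2 * z + 1` by `k * (k - 1)`.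
  refine ⟨i, j, l, ?_⟩
  rw [sq_sub, sq_sub, sq_sub, ← hr_eq]
  linear_combination l * hm.symm

/-- For no `z ≥ N` is there a decomposition `z ^ 2 = u + y` into positive integers such that
`a * u`, `b * y` and `z` all have the same colour under `ψ`. This is the property of a
counterexample to be refuted; the bound `N` leaves room for finitely many solutions. -/
def AvoidsSquareSums (a b N : ℕ) (ψ : ℕ → Fin 2) : Prop :=
  ∀ ⦃z u y : ℕ⦄, N ≤ z → 0 < u → 0 < y → u + y = z ^ 2 → ψ (a * u) = ψ z → ψ (b * y) ≠ ψ z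

namespace AvoidsSquareSums

variable {a b N : ℕ} {ψ : ℕ → Fin 2}

theorem apply_mul_eq_of_add_sq_eq (h : AvoidsSquareSums a b N ψ) {z w u v : ℕ} (hz : N ≤ z)
    (hw : N ≤ w) (hwz : ψ w ≠ ψ z) (hu : 0 < u) (huz : u < z ^ 2) (hv : 0 < v)
    (huv : v + z ^ 2 = u + w ^ 2) (hψu : ψ (a * u) = ψ z) : ψ (a * v) = ψ z := by
  have hreflect : ψ (b * (z ^ 2 - u)) ≠ ψ z := h hz hu (by omega) (by omega) hψu
  by_contra hψv
  exact h hw hv (show 0 < z ^ 2 - u by omega) (by omega) (by omega) (by omega)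

theorem exists_gt_apply_mul_eq (h : AvoidsSquareSums a b N ψ) (ha : 0 < a) (hb : 0 < b)
    (p : Fin 2) (n : ℕ) : ∃ u, n < u ∧ ψ (a * u) = p := by
  by_contra! hne
  set k := N + n + 1 + a * (n + 1)
  have hk_le : k ≤ a * k := Nat.le_mul_of_pos_left k ha
  have hk_le_sq : a * k ≤ (a * k) ^ 2 := Nat.le_self_pow two_ne_zero _
  have hψz : ψ (a * k) ≠ p := hne k (by omega)
  have hψu : ψ (a * ((a * k) ^ 2 - a * (n + 1))) ≠ p := hne _ (by omega)
  have hψy : ψ (b * (a * (n + 1))) ≠ p := by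
    rw [mul_left_comm]
    exact hne _ (n.lt_succ_self.trans_le (Nat.le_mul_of_pos_left _ hb))
  exact h (z := a * k) (u := (a * k) ^ 2 - a * (n + 1)) (y := a * (n + 1)) (by omega) (by omega)
    (by positivity) (by omega) (by omega) (by omega)

theorem exists_gt_apply_eq (h : AvoidsSquareSums a b N ψ) (ha : 0 < a) (hb : 0 < b)
    (p : Fin 2) (n : ℕ) : ∃ z, n < z ∧ ψ z = p := by
  obtain ⟨u, hu, hψu⟩ := h.exists_gt_apply_mul_eq ha hb p n
  exact ⟨a * u, hu.trans_le (Nat.le_mul_of_pos_left u ha), hψu⟩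

theorem apply_mul_eq_of_forall_apply_add_ne (h : AvoidsSquareSums a b N ψ) {g z u n : ℕ}
    (hg : 0 < g) (hz : N ≤ z) (hgz : 5 * g ^ 3 ≤ z)
    (hrun : ∀ k, 0 < k → k ≤ g + 1 → ψ (z + k) ≠ ψ z)
    (hu : 0 < u) (hguz : g * u ≤ z ^ 2) (hψu : ψ (a * u) = ψ z)
    (hn : 16 * z ^ 2 ≤ g * n) (hnz : n ≤ z ^ 2) : ψ (a * n) = ψ z := by
  set S : Set ℕ := {v | 0 < v ∧ ψ (a * v) = ψ z}
  have hstep (k : ℕ) (hk : 0 < k) (hkg : k ≤ g + 1) : ∀ v ∈ S,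
      v + ((z + k) ^ 2 - z ^ 2) ≤ z ^ 2 → v + ((z + k) ^ 2 - z ^ 2) ∈ S := by
    rintro v ⟨hv, hψv⟩ hle
    have hlt : z ^ 2 < (z + k) ^ 2 := Nat.pow_lt_pow_left (by omega) two_ne_zero
    exact ⟨by omega, h.apply_mul_eq_of_add_sq_eq hz (by omega) (hrun k hk hkg) hv (by omega)
      (by omega) (by omega) hψv⟩
  have hun : u ≤ n := Nat.le_of_mul_le_mul_left (by omega) hg
  obtain ⟨i, j, l, hijl⟩ := exists_eq_sum_sq_sub_sq (n := n - u) hg hgz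
    (by rw [Nat.mul_sub]; omega)
  have hi := add_mul_mem_of_forall_add_mem (hstep 1 (by omega) (by omega)) i
    (show u ∈ S from ⟨hu, hψu⟩) (by omega)
  have hj := add_mul_mem_of_forall_add_mem (hstep 2 (by omega) (by omega)) j hi (by omega)
  have hl := add_mul_mem_of_forall_add_mem (hstep (g + 1) (by omega) le_rfl) l hj (by omega)
  rw [← Nat.sub_add_cancel hun, hijl, add_comm, ← add_assoc, ← add_assoc]
  exact hl.2

theorem exists_forall_ge_exists_apply_add_eq (h : AvoidsSquareSums a b N ψ) (ha : 0 < a)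
    (hb : 0 < b) : ∃ G M, ∀ z, M ≤ z → ∃ k, 0 < k ∧ k ≤ G ∧ ψ (z + k) = ψ z := by
  choose u hu hψu using fun p => h.exists_gt_apply_mul_eq ha hb p 0
  set g := 64 * a with hg
  refine ⟨g + 1, N + 5 * g ^ 3 + g * ∑ p, u p + 2 * (a * b), fun z hz => ?_⟩
  by_contra! hrun
  have hz_sq : z ≤ z ^ 2 := Nat.le_self_pow two_ne_zero z
  have hgu : g * u (ψ z) ≤ g * ∑ p, u p :=
    Nat.mul_le_mul_left g (Finset.single_le_sum (fun _ _ => Nat.zero_le _) (Finset.mem_univ _))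
  have hfill (n : ℕ) (hn : 16 * z ^ 2 ≤ g * n) (hnz : n ≤ z ^ 2) : ψ (a * n) = ψ z :=
    h.apply_mul_eq_of_forall_apply_add_ne (by omega) (by omega) (by omega) hrun (hu _) (by omega)
      (hψu _) hn hnz
  have hab : 0 < 2 * (a * b) := by positivity
  obtain ⟨v, hv, hv_le, hv_ge⟩ := exists_mul_le_and_le_two_mul hab (show _ ≤ z ^ 2 by omega)
  have hav_le : 2 * (a * v) ≤ z ^ 2 := by nlinarith [Nat.le_mul_of_pos_left (a * v) hb]
  have hbv_le : b * v ≤ z ^ 2 := by nlinarith [Nat.le_mul_of_pos_left (b * v) ha]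
  have hav_pos : 0 < a * v := Nat.mul_pos ha hv
  refine h (z := z) (u := z ^ 2 - a * v) (y := a * v) (by omega) (by omega) hav_pos (by omega) ?_ ?_
  · refine hfill _ ?_ (by omega)
    calc 16 * z ^ 2 ≤ 64 * (z ^ 2 - a * v) := by omega
      _ ≤ g * (z ^ 2 - a * v) := Nat.mul_le_mul_right _ (by omega)
  · rw [mul_left_comm]
    exact hfill _ (by rw [hg]; nlinarith) hbv_le

theorem apply_mul_add_two_mul_eq_of_run (h : AvoidsSquareSums a b N ψ) {t d u : ℕ} (ht : N ≤ t)
    (hψt : ψ t ≠ ψ (t + 1)) (hψd : ψ (t + d) = ψ (t + 1)) (hψd' : ψ (t + d + 1) ≠ ψ (t + 1))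
    (hu : 0 < u) (hut : u + 2 * d < t) (hψu : ψ (a * u) = ψ (t + 1)) :
    ψ (a * (u + 2 * d)) = ψ (t + 1) := by
  have hψv : ψ (a * (u + (2 * (t + d) + 1))) = ψ (t + 1) := by
    rw [← hψd] at hψu hψd' ⊢
    exact h.apply_mul_eq_of_add_sq_eq (by omega) (by omega) hψd' hu (by nlinarith) (by omega)
      (by ring) hψu
  exact h.apply_mul_eq_of_add_sq_eq (by omega) ht hψt (by omega) (by nlinarith) (by omega)
    (by ring) hψv

theorem exists_period (h : AvoidsSquareSums a b N ψ) (ha : 0 < a) (hb : 0 < b) :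
    ∃ P, 0 < P ∧ ∀ u, 0 < u → ψ (a * (u + P)) = ψ (a * u) := by
  obtain ⟨G, M, hG⟩ := h.exists_forall_ge_exists_apply_add_eq ha hb
  refine ⟨2 * G.factorial, by positivity, fun u hu => ?_⟩
  set p := ψ (a * u)
  obtain ⟨q, hq⟩ : ∃ q, q ≠ p := exists_ne p
  obtain ⟨m, hm, hψm⟩ := h.exists_gt_apply_eq ha hb q (N + M + u + 2 * G.factorial + 2 * G)
  obtain ⟨m', hmm', hψm'⟩ := h.exists_gt_apply_eq ha hb p m
  obtain ⟨t, hmt, -, hψt, hψt'⟩ := exists_and_not_succ_of_le (p := fun k => ψ k ≠ p) hmm'.le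
    (hψm.trans_ne hq) (not_not_intro hψm')
  rw [not_not] at hψt'
  obtain ⟨k, hk, hkG, hψk⟩ := hG t (by omega)
  obtain ⟨s, hts, hsk, hψs, hψs'⟩ := exists_and_not_succ_of_le (p := fun k => ψ k = p)
    (show t + 1 ≤ t + k by omega) hψt' (hψk.trans_ne hψt)
  obtain ⟨d, rfl⟩ := Nat.exists_eq_add_of_le (show t ≤ s by omega)
  obtain ⟨f, hf⟩ : d ∣ G.factorial := Nat.dvd_factorial (by omega) (by omega)
  have hP : 2 * G.factorial = f * (2 * d) := by rw [hf]; ring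
  have hstep : ∀ v ∈ {v | 0 < v ∧ ψ (a * v) = p}, v + 2 * d ≤ u + 2 * G.factorial →
      v + 2 * d ∈ {v | 0 < v ∧ ψ (a * v) = p} := by
    rintro v ⟨hv, hψv⟩ hle
    rw [← hψt'] at hψt hψs hψs' hψv
    exact ⟨by omega, (h.apply_mul_add_two_mul_eq_of_run (by omega) hψt hψs hψs' hv (by omega)
      hψv).trans hψt'⟩
  rw [hP] at hstep ⊢
  exact (add_mul_mem_of_forall_add_mem hstep f ⟨hu, rfl⟩ le_rfl).2

end AvoidsSquareSums

theorem not_avoidsSquareSums {a b : ℕ} (ha : 0 < a) (hb : 0 < b) (N : ℕ) (ψ : ℕ → Fin 2) :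
    ¬AvoidsSquareSums a b N ψ := by
  intro h
  obtain ⟨P, hP, hper⟩ := h.exists_period ha hb
  have hmul (k : ℕ) (hk : 0 < k) : ψ (a * (P * k)) = ψ (a * P) := by
    induction k, hk using Nat.le_induction with
    | base => rw [Nat.succ_eq_add_one, zero_add, mul_one]
    | succ k hk ih => rw [Nat.mul_succ, hper _ (Nat.mul_pos hP hk), ih]
  set k := N + 2
  have haPk : k ≤ a * (P * k) := by
    rw [← mul_assoc]
    exact Nat.le_mul_of_pos_left k (Nat.mul_pos ha hP)
  obtain ⟨m, hm⟩ : ∃ m, a * (P * k) * k = m + 2 :=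
    Nat.exists_eq_add_of_le' ((Nat.le_add_left 2 N).trans (Nat.le_mul_of_pos_left k (by omega)))
  refine h (z := a * (P * k)) (u := P * (a * (m + 1))) (y := P * a) (by omega) (by positivity)
    (by positivity) ?_ ?_ ?_
  · calc P * (a * (m + 1)) + P * a = a * P * (m + 2) := by ring
      _ = (a * (P * k)) ^ 2 := by rw [← hm]; ring
  · rw [hmul _ (by positivity), hmul k (by omega)]
  · calc ψ (b * (P * a)) = ψ (a * (P * b)) := by ring_nf
      _ = ψ (a * P) := hmul b hb
      _ = ψ (a * (P * k)) := (hmul k (by omega)).symm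

theorem stmt_5_general (a b c : ℕ) (ha : 0 < a) (hb : 0 < b) (hc : 0 < c) (φ : ℕ → Fin 2) :
    {w : ℕ × ℕ × ℕ | 0 < w.1 ∧ 0 < w.2.1 ∧ 0 < w.2.2 ∧
      φ w.1 = φ w.2.1 ∧ φ w.1 = φ w.2.2 ∧
      a * w.1 + b * w.2.1 = c * w.2.2 ^ 2}.Infinite := by
  intro hfin
  obtain ⟨N, hN⟩ := (hfin.image fun w => w.2.2).bddAbove
  refine not_avoidsSquareSums (Nat.mul_pos hb hc) (Nat.mul_pos ha hc) (N + 1)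
    (fun n => φ (a * b * n)) fun z u y hz hu hy huy hψu hψy => ?_
  have hz_pos : 0 < z := by omega
  have hle : a * b * z ≤ N := hN ⟨(a * b * (b * c * u), a * b * (a * c * y), a * b * z),
    ⟨by positivity, by positivity, by positivity, hψu.trans hψy.symm, hψu,
      by linear_combination (a * b) ^ 2 * c * huy⟩, rfl⟩
  have := Nat.le_mul_of_pos_left z (Nat.mul_pos ha hb)
  omega

/-- Let `a, b, c` be positive integers such that `gcd(c, a / gcd(a,b))` and
`gcd(c, b / gcd(a,b))` are powers of 2. Then the equation `a·x + b·y = c·z²` is 2-Ramsey. -/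
theorem stmt_5 (a b c : ℕ) (ha : 0 < a) (hb : 0 < b) (hc : 0 < c)
    (hac : ∃ ℓ : ℕ, Nat.gcd c (a / Nat.gcd a b) = 2 ^ ℓ)
    (hbc : ∃ ℓ' : ℕ, Nat.gcd c (b / Nat.gcd a b) = 2 ^ ℓ') :
    ∀ φ : ℕ → Fin 2,
      {w : ℕ × ℕ × ℕ | 0 < w.1 ∧ 0 < w.2.1 ∧ 0 < w.2.2 ∧
        φ w.1 = φ w.2.1 ∧ φ w.1 = φ w.2.2 ∧
        a * w.1 + b * w.2.1 = c * w.2.2 ^ 2}.Infinite :=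
  stmt_5_general a b c ha hb hc
end
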